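/- For every integer n ≥ 3, as an identity in the field of rational functions ℚ(z1,z2,z3), the triply-refined ASM generating function at x = y = 1 satisfies: (z1·z3−z3+1)(z2·z3−z2+1)·z3^{n−1}·Ztri_n(1,1;z1,z2,1/z3) = ( z1·z3 / ( A_{n−2}·(z1−z2)(z3−1) ) )·( (z1z3−z1+1)(z1z3−z3+1)·z2·Z_{n−1}(1,1;z1)·Zopp_{n−1}(1,1;z2,z3) − (z2z3−z2+1)(z2z3−z3+1)·z1·Z_{n−1}(1,1;z2)·Zopp_{n−1}(1,1;z1,z3) ) + (z2−1)(z3−1)(z1z3−z3+1)·z1·z2^{n−1}·Z_{n−1}(1,1;z1) + (z1−1)(z3−1)(z2z3−z2+1)·z3^{n−1}·Z_{n−1}(1,1;z2), where A_m denotes the number of ASMs of size m. -/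

import Mathlib

open Finset

/-- The `n × n` integer matrix encoded by `e`, with entries in `{-1, 0, 1}`. -/
def asmMat {n : ℕ} (e : Fin n → Fin n → Fin 3) : Fin n → Fin n → ℤ :=
  fun i j => (e i j : ℤ) - 1

/-- `A` is an alternating sign matrix: all entries lie in `{-1, 0, 1}`, every
partial row sum and every partial column sum is `0` or `1` (equivalently, the
nonzero entries of each row and of each column alternate in sign), and every
complete row sum and column sum is `1`. -/
def IsASM {n : ℕ} (A : Fin n → Fin n → ℤ) : Prop :=
  (∀ i j, A i j = -1 ∨ A i j = 0 ∨ A i j = 1) ∧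
  (∀ (i j : Fin n), (∑ j' ∈ univ.filter (fun j' : Fin n => j' ≤ j), A i j') = 0 ∨
    (∑ j' ∈ univ.filter (fun j' : Fin n => j' ≤ j), A i j') = 1) ∧
  (∀ (i j : Fin n), (∑ i' ∈ univ.filter (fun i' : Fin n => i' ≤ i), A i' j) = 0 ∨
    (∑ i' ∈ univ.filter (fun i' : Fin n => i' ≤ i), A i' j) = 1) ∧
  (∀ i : Fin n, (∑ j, A i j) = 1) ∧
  (∀ j : Fin n, (∑ i, A i j) = 1)

/-- `ν(A)`, the number of generalized inversions of `A`. -/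
def nuASM {n : ℕ} (A : Fin n → Fin n → ℤ) : ℕ :=
  (∑ i : Fin n, ∑ i' : Fin n, ∑ j : Fin n, ∑ j' : Fin n,
      if i < i' ∧ j' ≤ j then A i j * A i' j' else 0).toNat

/-- `μ(A)`, the number of entries of `A` equal to `-1`. -/
def muASM {n : ℕ} (A : Fin n → Fin n → ℤ) : ℕ :=
  (univ.filter (fun p : Fin n × Fin n => A p.1 p.2 = -1)).card

/-- `ρT(A)`, the number of `0`'s to the left of the `1` in the top row of `A`. -/
def rhoT {n : ℕ} (A : Fin n → Fin n → ℤ) : ℕ :=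
  (univ.filter (fun j : Fin n =>
    A ⟨0, j.pos⟩ j = 0 ∧ ∃ j' : Fin n, j < j' ∧ A ⟨0, j.pos⟩ j' = 1)).card

/-- `ρR(A)`, the number of `0`'s below the `1` in the right-most column of `A`. -/
def rhoR {n : ℕ} (A : Fin n → Fin n → ℤ) : ℕ :=
  (univ.filter (fun i : Fin n =>
    A i ⟨n - 1, Nat.sub_lt i.pos Nat.one_pos⟩ = 0 ∧
      ∃ i' : Fin n, i' < i ∧ A i' ⟨n - 1, Nat.sub_lt i.pos Nat.one_pos⟩ = 1)).card

/-- `ρB(A)`, the number of `0`'s to the right of the `1` in the bottom row of `A`. -/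
def rhoB {n : ℕ} (A : Fin n → Fin n → ℤ) : ℕ :=
  (univ.filter (fun j : Fin n =>
    A ⟨n - 1, Nat.sub_lt j.pos Nat.one_pos⟩ j = 0 ∧
      ∃ j' : Fin n, j' < j ∧ A ⟨n - 1, Nat.sub_lt j.pos Nat.one_pos⟩ j' = 1)).card

/-- `ρL(A)`, the number of `0`'s above the `1` in the left-most column of `A`. -/
def rhoL {n : ℕ} (A : Fin n → Fin n → ℤ) : ℕ :=
  (univ.filter (fun i : Fin n =>
    A i ⟨0, i.pos⟩ = 0 ∧ ∃ i' : Fin n, i < i' ∧ A i' ⟨0, i.pos⟩ = 1)).card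

open Classical in
/-- The quadruply-refined ASM generating function
`Zqua_n(x,y;z1,z2,z3,z4) = Σ_A x^{ν(A)} y^{μ(A)} z1^{ρT(A)} z2^{ρR(A)} z3^{ρB(A)} z4^{ρL(A)}`. -/
noncomputable def Zqua (n : ℕ) {R : Type*} [CommRing R] (x y z1 z2 z3 z4 : R) : R :=
  ∑ e : Fin n → Fin n → Fin 3,
    if IsASM (asmMat e) then
      x ^ nuASM (asmMat e) * y ^ muASM (asmMat e) * z1 ^ rhoT (asmMat e) *
        z2 ^ rhoR (asmMat e) * z3 ^ rhoB (asmMat e) * z4 ^ rhoL (asmMat e)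
    else 0

/-- Adjacent-boundary doubly-refined generating function `Zadj_n(x,y;z1,z2)`. -/
noncomputable def Zadj (n : ℕ) {R : Type*} [CommRing R] (x y z1 z2 : R) : R :=
  Zqua n x y z1 1 1 z2

/-- Alternative adjacent-boundary doubly-refined generating function `Zbaradj_n(x,y;z1,z2)`. -/
noncomputable def Zbaradj (n : ℕ) {R : Type*} [CommRing R] (x y z1 z2 : R) : R :=
  Zqua n x y z1 z2 1 1

/-- Triply-refined generating function `Ztri_n(x,y;z1,z2,z3)`. -/
noncomputable def Ztri (n : ℕ) {R : Type*} [CommRing R] (x y z1 z2 z3 : R) : R :=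
  Zqua n x y z1 1 z2 z3

/-- Opposite-boundary doubly-refined generating function `Zopp_n(x,y;z1,z2)`. -/
noncomputable def Zopp (n : ℕ) {R : Type*} [CommRing R] (x y z1 z2 : R) : R :=
  Zqua n x y z1 1 z2 1

/-- Singly-refined generating function `Z_n(x,y;z)`. -/
noncomputable def Zsing (n : ℕ) {R : Type*} [CommRing R] (x y z : R) : R :=
  Zqua n x y z 1 1 1

/-- Unrefined generating function `Z_n(x,y)`.  Note `Zun 0 x y = 1`. -/
noncomputable def Zun (n : ℕ) {R : Type*} [CommRing R] (x y : R) : R :=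
  Zqua n x y 1 1 1 1


open Classical in
/-- `A_n`, the number of alternating sign matrices of size `n`. -/
noncomputable def numASM (n : ℕ) : ℕ :=
  (univ.filter (fun e : Fin n → Fin n → Fin 3 => IsASM (asmMat e))).card

/-- The field of rational functions over `ℚ` in 3 variables. -/
noncomputable abbrev K3 : Type := FractionRing (MvPolynomial (Fin 3) ℚ)

noncomputable def vz1 : K3 := algebraMap (MvPolynomial (Fin 3) ℚ) K3 (MvPolynomial.X 0)
noncomputable def vz2 : K3 := algebraMap (MvPolynomial (Fin 3) ℚ) K3 (MvPolynomial.X 1)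
noncomputable def vz3 : K3 := algebraMap (MvPolynomial (Fin 3) ℚ) K3 (MvPolynomial.X 2)

/-!
Weight the configurations of the six-vertex model with domain walls at the combinatorial point,
given by a primitive cube root of unity `ω`. Two facts determine the partition function. By the
Yang–Baxter equation it is symmetric in its spectral parameters. By Stroganov's argument, its
product with the differences of one parameter from all others is a polynomial in that parameter
with no exponent congruent to `2` modulo `3`. Polynomials this sparse are determined by few of
their zeros, which forces a quadratic relation between the partition functions in which at most
three parameters differ from `1`.

A Möbius change of parameters turns the spectral parameters into the refinement variables
`z₁, z₂, z₃`, apart from the two corners on the left side, whose weights enter bilinearly;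
eliminating them leaves the generating function of alternating sign matrices. The identity,
obtained for generic parameters over an algebraically closed field, descends to polynomials with
integer coefficients and hence holds over every commutative ring.
-/

section VertexModel

variable {R S : Type*} [CommRing R] [CommRing S]

/-- The Boltzmann weight of a vertex as a function of the states of its four edges, taken in the
order left, top, right, bottom. -/
abbrev VertexWeight (R : Type*) : Type _ := Bool → Bool → Bool → Bool → R

/-- The partition function of a single row of vertices with weights `w j` and boundary edges in
the states `l`, `r`, `t j`, `b j`; the sum is over the states `h` of the horizontal edges. -/
def rowZ {n : ℕ} (w : Fin n → VertexWeight R) (l r : Bool) (t b : Fin n → Bool) : R :=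
  ∑ h : Fin (n + 1) → Bool, if h 0 = l ∧ h (Fin.last n) = r then
    ∏ j, w j (h j.castSucc) (t j) (h j.succ) (b j) else 0

/-- The partition function of an `m × n` lattice of vertices with weights `w i j` and prescribed
states of the boundary edges; the sum is over the states `h` of the horizontal edges and `v` of the
vertical ones. -/
def latticeZ {m n : ℕ} (w : Fin m → Fin n → VertexWeight R) (l r : Fin m → Bool)
    (t b : Fin n → Bool) : R :=
  ∑ h : Fin m → Fin (n + 1) → Bool, ∑ v : Fin (m + 1) → Fin n → Bool,
    if (∀ i, h i 0 = l i) ∧ (∀ i, h i (Fin.last n) = r i) ∧ v 0 = t ∧ v (Fin.last m) = b then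
      ∏ i, ∏ j, w i j (h i j.castSucc) (v i.castSucc j) (h i j.succ) (v i.succ j) else 0

theorem rowZ_zero (w : Fin 0 → VertexWeight R) (l r : Bool) (t b : Fin 0 → Bool) :
    rowZ w l r t b = if l = r then 1 else 0 := by
  rw [rowZ, ← (Equiv.funUnique (Fin 1) Bool).symm.sum_comp]
  simp [ite_and]

theorem rowZ_succ {n : ℕ} (w : Fin (n + 1) → VertexWeight R) (l r : Bool)
    (t b : Fin (n + 1) → Bool) :
    rowZ w l r t b = ∑ m : Bool, w 0 l (t 0) m (b 0) *
      rowZ (fun j => w j.succ) m r (fun j => t j.succ) (fun j => b j.succ) := by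
  unfold rowZ
  rw [← (Fin.consEquiv (fun _ : Fin (n + 2) => Bool)).sum_comp, Fintype.sum_prod_type]
  simp only [Fin.consEquiv_apply, Fin.cons_zero, mul_sum, mul_ite, mul_zero]
  rw [sum_comm, sum_comm (s := (univ : Finset Bool))]
  refine sum_congr rfl fun h _ => ?_
  rw [Fintype.sum_eq_single l (fun x hx => by simp [hx]),
    Fintype.sum_eq_single (h 0) (fun x hx => by simp [Ne.symm hx])]
  simp [Fin.prod_univ_succ, ← Fin.succ_last]

theorem latticeZ_succ {m n : ℕ} (w : Fin (m + 1) → Fin n → VertexWeight R)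
    (l r : Fin (m + 1) → Bool) (t b : Fin n → Bool) :
    latticeZ w l r t b = ∑ s : Fin n → Bool, rowZ (w 0) (l 0) (r 0) t s *
      latticeZ (fun i => w i.succ) (fun i => l i.succ) (fun i => r i.succ) s b := by
  unfold rowZ latticeZ
  rw [← (Fin.consEquiv (fun _ : Fin (m + 1) => Fin (n + 1) → Bool)).sum_comp,
    Fintype.sum_prod_type]
  simp only [← (Fin.consEquiv (fun _ : Fin (m + 2) => Fin n → Bool)).sum_comp,
    Fintype.sum_prod_type, Fin.consEquiv_apply, Fin.cons_zero, sum_mul]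
  simp only [mul_sum]
  rw [sum_comm (s := (univ : Finset (Fin n → Bool)))]
  refine sum_congr rfl fun h _ => ?_
  rw [sum_comm (s := (univ : Finset (Fin n → Bool)))]
  refine sum_congr rfl fun h' _ => ?_
  rw [sum_comm (s := (univ : Finset (Fin n → Bool))),
    sum_comm (s := (univ : Finset (Fin n → Bool)))]
  refine sum_congr rfl fun v _ => ?_
  rw [Fintype.sum_eq_single t (fun x hx => by simp [hx]),
    Fintype.sum_eq_single (v 0) (fun x hx => by simp [Ne.symm hx]),
    Fin.prod_univ_succ, ite_zero_mul_ite_zero]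
  simp only [Fin.forall_fin_succ, Fin.cons_zero, Fin.cons_succ, ← Fin.succ_last, Fin.castSucc_zero,
    ← Fin.succ_castSucc]
  exact if_congr (by tauto) rfl rfl

theorem latticeZ_transpose {m n : ℕ} (w : Fin m → Fin n → VertexWeight R) (l r : Fin m → Bool)
    (t b : Fin n → Bool) :
    latticeZ w l r t b = latticeZ (fun j i l t r b => w i j t l b r) t b l r := by
  unfold latticeZ
  rw [← (Equiv.piComm (fun (_ : Fin (n + 1)) (_ : Fin m) => Bool)).sum_comp]
  simp only [← (Equiv.piComm (fun (_ : Fin n) (_ : Fin (m + 1)) => Bool)).sum_comp]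
  rw [sum_comm]
  refine sum_congr rfl fun h _ => sum_congr rfl fun v _ => ?_
  rw [prod_comm]
  simp only [Equiv.piComm_apply, funext_iff, Function.swap]
  exact if_congr (by tauto) rfl rfl

theorem latticeZ_flip {m n : ℕ} (w : Fin m → Fin n → VertexWeight R) (l r : Fin m → Bool)
    (t b : Fin n → Bool) :
    latticeZ w l r t b = latticeZ (fun i j l t r b => w i.rev j l (!b) r (!t))
      (fun i => l i.rev) (fun i => r i.rev) (fun j => !b j) (fun j => !t j) := by
  have hh : Function.Involutive (fun (h : Fin m → Fin (n + 1) → Bool) i => h i.rev) :=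
    fun h => by simp
  have hv : Function.Involutive (fun (v : Fin (m + 1) → Fin n → Bool) k j => !v k.rev j) :=
    fun v => by simp
  unfold latticeZ
  refine Fintype.sum_equiv hh.toPerm _ _ fun h => Fintype.sum_equiv hv.toPerm _ _ fun v => ?_
  rw [← Equiv.prod_comp (Fin.revPerm (n := m))]
  simp only [Function.Involutive.coe_toPerm, Fin.revPerm_apply, Fin.rev_zero,
    Fin.rev_last, Fin.rev_castSucc, Fin.rev_succ, Bool.not_not, funext_iff, Bool.not_inj_iff]
  refine if_congr ?_ rfl rfl
  rw [← Fin.rev_surjective.forall (p := fun i => h i 0 = l i),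
    ← Fin.rev_surjective.forall (p := fun i => h i (Fin.last n) = r i)]
  tauto

theorem map_latticeZ (f : R →+* S) {m n : ℕ} (w : Fin m → Fin n → VertexWeight R)
    (l r : Fin m → Bool) (t b : Fin n → Bool) :
    f (latticeZ w l r t b) = latticeZ (fun i j x y z u => f (w i j x y z u)) l r t b := by
  simp only [latticeZ, map_sum, apply_ite f, map_prod, map_zero]

end VertexModel

/-- The weights of a six-vertex configuration. In terms of alternating sign matrices, `c` and `d`
belong to the entries `1` and `-1`, while `a` and `b` belong to the entries `0` whose row and column
partial sums agree, respectively differ. -/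
structure SixVertexWeights (R : Type*) where
  a : R
  b : R
  c : R
  d : R

namespace SixVertexWeights

variable {R S : Type*} [CommRing R] [CommRing S]

/-- The vertex weight of the six-vertex model: the six admissible vertices satisfy the ice rule
`left + bottom = top + right`. -/
def weight (w : SixVertexWeights R) : VertexWeight R
  | false, false, false, false => w.a
  | true, true, true, true => w.a
  | false, true, false, true => w.b
  | true, false, true, false => w.b
  | false, false, true, true => w.c
  | true, true, false, false => w.d
  | _, _, _, _ => 0

/-- The weights after a vertical reflection of the lattice, which exchanges `a` and `b`. -/
@[simps]
def flip (w : SixVertexWeights R) : SixVertexWeights R := ⟨w.b, w.a, w.c, w.d⟩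

/-- The image of the weights under a ring homomorphism. -/
@[simps]
def map (f : R →+* S) (w : SixVertexWeights R) : SixVertexWeights S :=
  ⟨f w.a, f w.b, f w.c, f w.d⟩

theorem weight_transpose (w : SixVertexWeights R) (l t r b : Bool) :
    w.weight t l b r = w.weight l t r b := by
  revert l t r b; simp [weight]

theorem weight_flip (w : SixVertexWeights R) (l t r b : Bool) :
    w.weight l (!b) r (!t) = w.flip.weight l t r b := by
  revert l t r b; simp [weight]

theorem map_weight (f : R →+* S) (w : SixVertexWeights R) (l t r b : Bool) :
    f (w.weight l t r b) = (w.map f).weight l t r b := by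
  revert l t r b; simp [weight]

end SixVertexWeights

section DomainWall

variable {R S : Type*} [CommRing R] [CommRing S]

/-- The partition function of the six-vertex model with domain wall boundary conditions. -/
def dwZ {n : ℕ} (W : Fin n → Fin n → SixVertexWeights R) : R :=
  latticeZ (fun i j => (W i j).weight) (fun _ => false) (fun _ => true) (fun _ => false)
    (fun _ => true)

theorem dwZ_transpose {n : ℕ} (W : Fin n → Fin n → SixVertexWeights R) :
    dwZ W = dwZ fun i j => W j i := by
  simp only [dwZ, latticeZ_transpose (fun i j => (W i j).weight), SixVertexWeights.weight_transpose]

theorem dwZ_flip {n : ℕ} (W : Fin n → Fin n → SixVertexWeights R) :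
    dwZ W = dwZ fun i j => (W i.rev j).flip := by
  simp only [dwZ, latticeZ_flip (fun i j => (W i j).weight), SixVertexWeights.weight_flip,
    Bool.not_true, Bool.not_false]

theorem map_dwZ (f : R →+* S) {n : ℕ} (W : Fin n → Fin n → SixVertexWeights R) :
    f (dwZ W) = dwZ fun i j => (W i j).map f := by
  simp only [dwZ, map_latticeZ, SixVertexWeights.map_weight]

end DomainWall

section YangBaxter

variable {R S : Type*} [CommRing R] [CommRing S]

/-- The six-vertex weights with row parameter `x` and column parameter `y` at the combinatorial
point; `ω` stands for a primitive cube root of unity. -/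
@[simps]
def cubicWeights (ω x y : R) : SixVertexWeights R :=
  ⟨y - ω ^ 2 * x, x - ω ^ 2 * y, 1 - ω ^ 2, (1 - ω ^ 2) * x * y⟩

theorem map_cubicWeights (f : R →+* S) (ω x y : R) :
    (cubicWeights ω x y).map f = cubicWeights (f ω) (f x) (f y) := by
  simp [SixVertexWeights.map, cubicWeights]

/-- The `R`-matrix which exchanges two consecutive rows with parameters `x` and `x'`, indexed by the
states of the two horizontal edges on its left and on its right. -/
def intertwiner (ω x x' : R) : Matrix (Bool × Bool) (Bool × Bool) R
  | (false, false), (false, false) => x' - ω ^ 2 * x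
  | (true, true), (true, true) => x' - ω ^ 2 * x
  | (false, true), (false, true) => (1 - ω ^ 2) * x
  | (true, false), (true, false) => (1 - ω ^ 2) * x'
  | (false, true), (true, false) => ω * (x - x')
  | (true, false), (false, true) => ω * (x - x')
  | _, _ => 0

/-- The transfer matrix of a column of two vertices with row parameters `x`, `x'`, column parameter
`y`, top edge `t` and bottom edge `b`. -/
def columnMatrix (ω x x' y : R) (t b : Bool) : Matrix (Bool × Bool) (Bool × Bool) R :=
  fun l r => ∑ s, (cubicWeights ω x y).weight l.1 t r.1 s *
    (cubicWeights ω x' y).weight l.2 s r.2 b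

/-- The transfer matrix of two rows with parameters `x` and `x'`, indexed by the states of the
horizontal boundary edges. -/
def twoRowMatrix (ω x x' : R) {n : ℕ} (y : Fin n → R) (t b : Fin n → Bool) :
    Matrix (Bool × Bool) (Bool × Bool) R :=
  fun l r => ∑ s, rowZ (fun j => (cubicWeights ω x (y j)).weight) l.1 r.1 t s *
    rowZ (fun j => (cubicWeights ω x' (y j)).weight) l.2 r.2 s b

theorem intertwiner_mul_columnMatrix {ω : R} (hω : ω ^ 2 + ω + 1 = 0) (x x' y : R) (t b : Bool) :
    intertwiner ω x x' * columnMatrix ω x x' y t b =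
      columnMatrix ω x' x y t b * intertwiner ω x x' := by
  have h2 : ω ^ 2 = -ω - 1 := by linear_combination hω
  ext ⟨l, l'⟩ ⟨r, r'⟩
  simp only [Matrix.mul_apply, Fintype.sum_prod_type, Fintype.sum_bool, columnMatrix, cubicWeights,
    h2]
  cases l <;> cases l' <;> cases t <;> cases r <;> cases r' <;> cases b <;>
  simp only [intertwiner, SixVertexWeights.weight, zero_mul, mul_zero, add_zero, zero_add, h2] <;>
  first
    | done
    | ring1
    | grind

theorem twoRowMatrix_zero (ω x x' : R) (y : Fin 0 → R) (t b : Fin 0 → Bool) :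
    twoRowMatrix ω x x' y t b = 1 := by
  ext l r
  simp [twoRowMatrix, rowZ_zero, Matrix.one_apply, Prod.ext_iff, ← ite_and, and_comm]

theorem twoRowMatrix_succ (ω x x' : R) {n : ℕ} (y : Fin (n + 1) → R) (t b : Fin (n + 1) → Bool) :
    twoRowMatrix ω x x' y t b = columnMatrix ω x x' (y 0) (t 0) (b 0) *
      twoRowMatrix ω x x' (fun j => y j.succ) (fun j => t j.succ) (fun j => b j.succ) := by
  ext l r
  simp only [Matrix.mul_apply, twoRowMatrix, columnMatrix, Fintype.sum_prod_type,
    ← (Fin.consEquiv (fun _ : Fin (n + 1) => Bool)).sum_comp]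
  simp only [Fin.consEquiv_apply, rowZ_succ, Fin.cons_zero, Fin.cons_succ, Fintype.sum_bool,
    mul_sum, ← sum_add_distrib]
  exact sum_congr rfl fun s _ => by ring

theorem intertwiner_mul_twoRowMatrix {ω : R} (hω : ω ^ 2 + ω + 1 = 0) (x x' : R) {n : ℕ}
    (y : Fin n → R) (t b : Fin n → Bool) :
    intertwiner ω x x' * twoRowMatrix ω x x' y t b =
      twoRowMatrix ω x' x y t b * intertwiner ω x x' := by
  induction n with
  | zero => rw [twoRowMatrix_zero, twoRowMatrix_zero, mul_one, one_mul]
  | succ n ih =>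
    rw [twoRowMatrix_succ, twoRowMatrix_succ, ← mul_assoc, intertwiner_mul_columnMatrix hω,
      mul_assoc, ih, mul_assoc]

theorem map_twoRowMatrix (f : R →+* S) (ω x x' : R) {n : ℕ} (y : Fin n → R) (t b : Fin n → Bool)
    (l r : Bool × Bool) :
    f (twoRowMatrix ω x x' y t b l r) =
      twoRowMatrix (f ω) (f x) (f x') (fun j => f (y j)) t b l r := by
  simp only [twoRowMatrix, rowZ, map_sum, map_mul, apply_ite f, map_prod, map_zero,
    SixVertexWeights.map_weight, map_cubicWeights]

open Polynomial in
theorem twoRowMatrix_comm {ω : R} (hω : ω ^ 2 + ω + 1 = 0) (x x' : R) {n : ℕ} (y : Fin n → R)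
    (t b : Fin n → Bool) :
    twoRowMatrix ω x x' y t b (false, false) (true, true) =
      twoRowMatrix ω x' x y t b (false, false) (true, true) := by
  -- The intertwiner acts on both states by `x' - ω ^ 2 * x`. To cancel this factor over any ring,
  -- replace `x'` by `X + C x'`, which turns the factor into a monic polynomial.
  have hCω : (C ω : R[X]) ^ 2 + C ω + 1 = 0 := by rw [← C_pow, ← C_add, ← C_1, ← C_add, hω, C_0]
  have hmul := congrFun₂ (intertwiner_mul_twoRowMatrix hCω (C x) (X + C x') (fun j => C (y j)) t b)
    (false, false) (true, true)
  simp only [Matrix.mul_apply, Fintype.sum_prod_type, Fintype.sum_bool, intertwiner, zero_mul,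
    mul_zero, add_zero, zero_add] at hmul
  have hregular : IsLeftRegular (X + C x' - C ω ^ 2 * C x) := by
    rw [show X + C x' - C ω ^ 2 * C x = X + C (x' - ω ^ 2 * x) by simp; ring]
    exact (monic_X_add_C _).isRegular.left
  have heq := congrArg (evalRingHom 0) (hregular (hmul.trans (mul_comm _ _)))
  simpa [map_twoRowMatrix] using heq

/-- The partition function of a rectangle of `cubicWeights` whose left edges are `false` and whose
right edges are `true`. -/
def rectZ (ω : R) {m n : ℕ} (x : Fin m → R) (y : Fin n → R) (t b : Fin n → Bool) : R :=
  latticeZ (fun i j => (cubicWeights ω (x i) (y j)).weight) (fun _ => false) (fun _ => true) t b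

theorem rectZ_succ (ω : R) {m n : ℕ} (x : Fin (m + 1) → R) (y : Fin n → R) (t b : Fin n → Bool) :
    rectZ ω x y t b = ∑ s : Fin n → Bool,
      rowZ (fun j => (cubicWeights ω (x 0) (y j)).weight) false true t s *
        rectZ ω (fun i => x i.succ) y s b :=
  latticeZ_succ ..

theorem rectZ_succ_succ (ω : R) {m n : ℕ} (x : Fin (m + 2) → R) (y : Fin n → R)
    (t b : Fin n → Bool) :
    rectZ ω x y t b = ∑ s : Fin n → Bool,
      twoRowMatrix ω (x 0) (x 1) y t s (false, false) (true, true) *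
        rectZ ω (fun i => x i.succ.succ) y s b := by
  simp only [rectZ_succ, twoRowMatrix, sum_mul, mul_sum]
  rw [sum_comm]
  refine sum_congr rfl fun s _ => sum_congr rfl fun s' _ => ?_
  rw [mul_assoc]
  rfl

theorem rectZ_comp_swap {ω : R} (hω : ω ^ 2 + ω + 1 = 0) {m n : ℕ} (x : Fin (m + 1) → R)
    (y : Fin n → R) (t b : Fin n → Bool) (i : Fin m) :
    rectZ ω (x ∘ Equiv.swap i.castSucc i.succ) y t b = rectZ ω x y t b := by
  induction m generalizing t with
  | zero => exact i.elim0
  | succ m ih =>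
    cases i using Fin.cases with
    | zero =>
      rw [rectZ_succ_succ, rectZ_succ_succ]
      refine sum_congr rfl fun s _ => ?_
      rw [twoRowMatrix_comm hω]
      congr 2
    | succ i =>
      have hswap : ∀ k : Fin (m + 1), Equiv.swap i.succ.castSucc i.succ.succ k.succ =
          (Equiv.swap i.castSucc i.succ k).succ := fun k => by
        simp only [Equiv.swap_apply_def, Fin.ext_iff]
        grind
      have hzero : Equiv.swap i.succ.castSucc i.succ.succ 0 = 0 :=
        Equiv.swap_apply_of_ne_of_ne (by simp [Fin.ext_iff]) (by simp [Fin.ext_iff])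
      rw [rectZ_succ, rectZ_succ]
      refine sum_congr rfl fun s _ => ?_
      simp only [Function.comp_apply, hzero, hswap, ← ih (fun k => x k.succ) s i]
      rfl

theorem rectZ_comp_perm {ω : R} (hω : ω ^ 2 + ω + 1 = 0) {m n : ℕ} (x : Fin m → R) (y : Fin n → R)
    (t b : Fin n → Bool) (σ : Equiv.Perm (Fin m)) :
    rectZ ω (x ∘ σ) y t b = rectZ ω x y t b := by
  cases m with
  | zero => congr 1; exact Subsingleton.elim _ _
  | succ m =>
    have hσ : σ ∈ Submonoid.closure (Set.range fun i : Fin m => Equiv.swap i.castSucc i.succ) := by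
      rw [Equiv.Perm.mclosure_swap_castSucc_succ]; trivial
    induction hσ using Submonoid.closure_induction generalizing x with
    | mem τ h =>
      obtain ⟨i, rfl⟩ := h
      exact rectZ_comp_swap hω x y t b i
    | one => rfl
    | mul τ τ' _ _ h h' => rw [Equiv.Perm.coe_mul, ← Function.comp_assoc, h', h]

/-- The domain wall partition function of the inhomogeneous six-vertex model with row parameters
`x` and column parameters `y`. -/
def cubicZ (ω : R) {n : ℕ} (x y : Fin n → R) : R := dwZ fun i j => cubicWeights ω (x i) (y j)

theorem map_cubicZ (f : R →+* S) (ω : R) {n : ℕ} (x y : Fin n → R) :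
    f (cubicZ ω x y) = cubicZ (f ω) (fun i => f (x i)) (fun j => f (y j)) := by
  simp only [cubicZ, map_dwZ, map_cubicWeights]

theorem cubicZ_comp_left {ω : R} (hω : ω ^ 2 + ω + 1 = 0) {n : ℕ} (x y : Fin n → R)
    (σ : Equiv.Perm (Fin n)) : cubicZ ω (x ∘ σ) y = cubicZ ω x y :=
  rectZ_comp_perm hω x y _ _ σ

theorem cubicZ_comm {ω : R} (hω : ω ^ 2 + ω + 1 = 0) {n : ℕ} (x y : Fin n → R) :
    cubicZ ω x y = cubicZ ω y x := by
  have hflip : ∀ x y : R, (cubicWeights ω y x).flip = cubicWeights ω x y := fun x y => by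
    simp only [SixVertexWeights.flip, cubicWeights, mul_right_comm]
  rw [cubicZ, dwZ_transpose, dwZ_flip, ← cubicZ_comp_left hω y x Fin.revPerm]
  simp only [cubicZ, hflip, Function.comp_apply, Fin.revPerm_apply]

theorem cubicZ_comp_right {ω : R} (hω : ω ^ 2 + ω + 1 = 0) {n : ℕ} (x y : Fin n → R)
    (σ : Equiv.Perm (Fin n)) : cubicZ ω x (y ∘ σ) = cubicZ ω x y := by
  rw [cubicZ_comm hω, cubicZ_comp_left hω, cubicZ_comm hω]

end YangBaxter

section Corners

variable {R : Type*} [CommRing R]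

open SixVertexWeights

theorem rowZ_weight_true {n : ℕ} (w : Fin n → SixVertexWeights R) (r : Bool) (s : Fin n → Bool) :
    rowZ (fun j => (w j).weight) true r (fun _ => false) s =
      if r = true ∧ s = fun _ => false then ∏ j, (w j).b else 0 := by
  induction n with
  | zero => cases r <;> simp [rowZ_zero, Subsingleton.elim s fun _ => false]
  | succ n ih =>
    have hs : (s = fun _ => false) ↔
        s 0 = false ∧ (fun j : Fin n => s j.succ) = fun _ => false := by
      simp [funext_iff, Fin.forall_fin_succ]
    simp only [rowZ_succ, Fintype.sum_bool, ih, hs, Fin.prod_univ_succ]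
    cases s 0 <;> cases r <;> simp [weight]

theorem rowZ_weight_false {n : ℕ} (w : Fin (n + 1) → SixVertexWeights R) (h : (w 0).a = 0)
    (s : Fin (n + 1) → Bool) :
    rowZ (fun j => (w j).weight) false true (fun _ => false) s =
      if s = Fin.cons true fun _ => false then (w 0).c * ∏ j : Fin n, (w j.succ).b else 0 := by
  have hs : (s = Fin.cons true fun _ => false) ↔
      s 0 = true ∧ (fun j : Fin n => s j.succ) = fun _ => false := by
    simp [funext_iff, Fin.forall_fin_succ]
  simp only [rowZ_succ, Fintype.sum_bool, rowZ_weight_true fun j : Fin n => w j.succ, hs]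
  cases s 0 <;> simp [weight, h]

theorem dwZ_corner {n : ℕ} (W : Fin (n + 1) → Fin (n + 1) → SixVertexWeights R)
    (h : (W 0 0).a = 0) :
    dwZ W = (W 0 0).c * (∏ j : Fin n, (W 0 j.succ).b) * (∏ i : Fin n, (W i.succ 0).b) *
      dwZ fun i j => W i.succ j.succ := by
  rw [dwZ, latticeZ_succ, Fintype.sum_eq_single (Fin.cons true fun _ => false)
      fun s hs => by rw [rowZ_weight_false _ h, if_neg hs, zero_mul],
    rowZ_weight_false _ h, if_pos rfl, latticeZ_transpose]
  simp only [weight_transpose]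
  rw [latticeZ_succ, Fintype.sum_eq_single (fun _ => false) fun s hs => by
    simp [rowZ_weight_true fun i : Fin n => W i.succ 0, hs]]
  simp only [Fin.cons_zero, Fin.cons_succ, rowZ_weight_true fun i : Fin n => W i.succ 0, and_self,
    if_true]
  rw [dwZ_transpose fun i j => W (Fin.succ i) j.succ]
  simp only [dwZ, mul_assoc]

theorem dwZ_corner_flip {n : ℕ} (W : Fin (n + 1) → Fin (n + 1) → SixVertexWeights R)
    (h : (W (Fin.last n) 0).b = 0) :
    dwZ W = (W (Fin.last n) 0).c * (∏ j : Fin n, (W (Fin.last n) j.succ).a) *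
      (∏ i : Fin n, (W i.castSucc 0).a) * dwZ fun i j => W i.castSucc j.succ := by
  rw [dwZ_flip, dwZ_corner _ (by simpa using h), dwZ_flip fun i j => W (Fin.castSucc i) j.succ]
  simp only [Fin.rev_zero, Fin.rev_succ, flip_b, flip_c,
    Fintype.prod_equiv Fin.revPerm (fun i : Fin n => (W i.rev.castSucc 0).a)
      (fun i => (W i.castSucc 0).a) fun _ => rfl]

end Corners

section SetCorners

variable {R : Type*}

/-- The weights `W` with the weight `a` of the top left vertex replaced by `s` and the weight `b` of
the bottom left vertex replaced by `t`. -/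
def setCorners {n : ℕ} (W : Fin (n + 1) → Fin (n + 1) → SixVertexWeights R) (s t : R)
    (i j : Fin (n + 1)) : SixVertexWeights R where
  a := if i = 0 ∧ j = 0 then s else (W i j).a
  b := if i = Fin.last n ∧ j = 0 then t else (W i j).b
  c := (W i j).c
  d := (W i j).d

theorem flip_setCorners {n : ℕ} (W : Fin (n + 1) → Fin (n + 1) → SixVertexWeights R) (s t : R)
    (i j : Fin (n + 1)) :
    (setCorners W s t i.rev j).flip = setCorners (fun i j => (W i.rev j).flip) t s i j := by
  simp [setCorners, SixVertexWeights.flip, Fin.rev_eq_iff]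

variable [CommRing R] {S : Type*} [CommRing S]

theorem map_setCorners (f : R →+* S) {n : ℕ}
    (W : Fin (n + 1) → Fin (n + 1) → SixVertexWeights R) (s t : R) (i j : Fin (n + 1)) :
    (setCorners W s t i j).map f =
      setCorners (fun i j => (W i j).map f) (f s) (f t) i j := by
  simp only [setCorners, SixVertexWeights.map, apply_ite f]

theorem dwZ_setCorners_left {n : ℕ} (W : Fin (n + 1) → Fin (n + 1) → SixVertexWeights R)
    (s t : R) :
    dwZ (setCorners W s t) =
      s * dwZ (setCorners W 1 t) + (1 - s) * dwZ (setCorners W 0 t) := by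
  simp only [dwZ, latticeZ_succ, rowZ_succ, mul_sum, ← sum_add_distrib]
  refine sum_congr rfl fun s _ => ?_
  simp only [Fintype.sum_bool]
  cases s 0 <;> simp [setCorners, SixVertexWeights.weight] <;> ring

theorem dwZ_setCorners_right {n : ℕ} (W : Fin (n + 1) → Fin (n + 1) → SixVertexWeights R)
    (s t : R) :
    dwZ (setCorners W s t) =
      t * dwZ (setCorners W s 1) + (1 - t) * dwZ (setCorners W s 0) := by
  simp only [dwZ_flip (setCorners W _ _), flip_setCorners]
  exact dwZ_setCorners_left _ t s

theorem dwZ_setCorners_zero_zero {n : ℕ} (W : Fin (n + 2) → Fin (n + 2) → SixVertexWeights R) :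
    dwZ (setCorners W 0 0) = 0 := by
  have hb : (setCorners W 0 0 (Fin.last n).succ 0).b = 0 := by simp [setCorners]
  have hprod : ∏ i : Fin (n + 1), (setCorners W 0 0 i.succ 0).b = 0 :=
    prod_eq_zero (mem_univ (Fin.last n)) hb
  rw [dwZ_corner _ (by simp [setCorners]), hprod, mul_zero, zero_mul]

theorem dwZ_setCorners_one_zero {n : ℕ} (W : Fin (n + 2) → Fin (n + 2) → SixVertexWeights R) :
    dwZ (setCorners W 1 0) = (W (Fin.last (n + 1)) 0).c *
      (∏ j : Fin (n + 1), (W (Fin.last (n + 1)) j.succ).a) *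
      (∏ i : Fin n, (W i.succ.castSucc 0).a) * dwZ fun i j => W i.castSucc j.succ := by
  rw [dwZ_corner_flip _ (by simp [setCorners]), Fin.prod_univ_succ fun i : Fin (n + 1) =>
    (setCorners W 1 0 i.castSucc 0).a]
  simp [setCorners]

theorem dwZ_setCorners_zero_one {n : ℕ} (W : Fin (n + 2) → Fin (n + 2) → SixVertexWeights R) :
    dwZ (setCorners W 0 1) = (W 0 0).c * (∏ j : Fin (n + 1), (W 0 j.succ).b) *
      (∏ i : Fin n, (W i.castSucc.succ 0).b) * dwZ fun i j => W i.succ j.succ := by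
  rw [dwZ_corner _ (by simp [setCorners]), Fin.prod_univ_castSucc fun i : Fin (n + 1) =>
    (setCorners W 0 1 i.succ 0).b]
  simp [setCorners]

-- The partition function is bilinear in the two corner weights and vanishes when both are zero, so
-- that its values for the corner weights `s', t'` determine those for `s, t`.
theorem dwZ_setCorners_eliminate {n : ℕ} (W : Fin (n + 2) → Fin (n + 2) → SixVertexWeights R)
    (s t s' t' : R) :
    s' * t' * dwZ (setCorners W s t) = s * t * dwZ (setCorners W s' t') +
      s * s' * (t' - t) * dwZ (setCorners W 1 0) + t * t' * (s' - s) * dwZ (setCorners W 0 1) := by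
  rw [dwZ_setCorners_left W s, dwZ_setCorners_left W s', dwZ_setCorners_right W 1 t,
    dwZ_setCorners_right W 0 t, dwZ_setCorners_right W 1 t', dwZ_setCorners_right W 0 t',
    dwZ_setCorners_zero_zero]
  ring

end SetCorners

section Gauge

variable {R : Type*} [CommRing R]

open SixVertexWeights

theorem latticeZ_mul {m n : ℕ} (C : Fin m → Fin n → R) (w : Fin m → Fin n → VertexWeight R)
    (l r : Fin m → Bool) (t b : Fin n → Bool) :
    latticeZ (fun i j l t r b => C i j * w i j l t r b) l r t b =
      (∏ i, ∏ j, C i j) * latticeZ w l r t b := by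
  simp only [latticeZ, mul_sum, mul_ite, mul_zero, prod_mul_distrib]

/-- The weights with `c` multiplied by `g`. -/
def SixVertexWeights.mulC (g : R) (w : SixVertexWeights R) : SixVertexWeights R :=
  ⟨w.a, w.b, g * w.c, w.d⟩

/-- The weights with `d` multiplied by `g`. -/
def SixVertexWeights.mulD (g : R) (w : SixVertexWeights R) : SixVertexWeights R :=
  ⟨w.a, w.b, w.c, g * w.d⟩

theorem SixVertexWeights.mulC_weight (g : R) (w : SixVertexWeights R) (l t r b : Bool) :
    (if l then g else 1) * (w.mulC g).weight l t r b =
      (if r then g else 1) * (w.mulD g).weight l t r b := by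
  cases l <;> cases t <;> cases r <;> cases b <;> simp [weight, mulC, mulD]

-- Along a row, `c` raises the state of the horizontal edge and `d` lowers it.
theorem rowZ_mulC (g : R) {n : ℕ} (w : Fin n → SixVertexWeights R) (l r : Bool)
    (t b : Fin n → Bool) :
    (if l then g else 1) * rowZ (fun j => ((w j).mulC g).weight) l r t b =
      (if r then g else 1) * rowZ (fun j => ((w j).mulD g).weight) l r t b := by
  induction n generalizing l with
  | zero => cases l <;> cases r <;> simp [rowZ_zero]
  | succ n ih =>
    simp only [rowZ_succ, mul_sum, ← mul_assoc, mulC_weight]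
    refine sum_congr rfl fun m _ => ?_
    rw [mul_right_comm, ih fun j => w j.succ]
    ring

theorem latticeZ_mulC {m n : ℕ} (g : Fin m → R) (W : Fin m → Fin n → SixVertexWeights R)
    (t b : Fin n → Bool) :
    latticeZ (fun i j => ((W i j).mulC (g i)).weight) (fun _ => false) (fun _ => true) t b =
      (∏ i, g i) *
        latticeZ (fun i j => ((W i j).mulD (g i)).weight) (fun _ => false) (fun _ => true) t b := by
  induction m generalizing t with
  | zero => simp [latticeZ]
  | succ m ih =>
    have hrow (s) := rowZ_mulC (g 0) (W 0) false true t s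
    simp only [Bool.false_eq_true, if_false, one_mul, if_true] at hrow
    simp only [latticeZ_succ, hrow, ih (fun i => g i.succ) (fun i => W i.succ), Fin.prod_univ_succ,
      mul_sum]
    exact sum_congr rfl fun s _ => by ring

theorem dwZ_mulC_row {n : ℕ} (g : Fin n → R) (W : Fin n → Fin n → SixVertexWeights R) :
    dwZ (fun i j => (W i j).mulC (g i)) = (∏ i, g i) * dwZ fun i j => (W i j).mulD (g i) :=
  latticeZ_mulC g W _ _

theorem dwZ_mulC_column {n : ℕ} (g : Fin n → R) (W : Fin n → Fin n → SixVertexWeights R) :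
    dwZ (fun i j => (W i j).mulC (g j)) = (∏ j, g j) * dwZ fun i j => (W i j).mulD (g j) := by
  rw [dwZ_transpose, dwZ_mulC_row, dwZ_transpose]

theorem dwZ_congr {n : ℕ} {W W' : Fin (n + 1) → Fin (n + 1) → SixVertexWeights R}
    (ha : ∀ i j, ¬(i = Fin.last n ∧ j = 0) → (W i j).a = (W' i j).a)
    (hb : ∀ i j, ¬(i = 0 ∧ j = 0) → (W i j).b = (W' i j).b)
    (hc : ∀ i j, (W i j).c = (W' i j).c)
    (hd : ∀ i j, i ≠ 0 → i ≠ Fin.last n → j ≠ 0 → (W i j).d = (W' i j).d) :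
    dwZ W = dwZ W' := by
  unfold dwZ latticeZ
  refine sum_congr rfl fun h _ => sum_congr rfl fun v _ => if_ctx_congr Iff.rfl ?_ fun _ => rfl
  rintro ⟨hl, -, ht, hbot⟩
  refine prod_congr rfl fun i _ => prod_congr rfl fun j _ => ?_
  have hleft : j = 0 → h i j.castSucc = false := fun hj => by rw [hj]; exact hl i
  have htop : i = 0 → v i.castSucc j = false := fun hi => by rw [hi]; exact congrFun ht j
  have hbottom : i = Fin.last n → v i.succ j = true := fun hi => by rw [hi]; exact congrFun hbot j
  specialize ha i j; specialize hb i j; specialize hc i j; specialize hd i j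
  generalize h i j.castSucc = l at *
  generalize h i j.succ = r at *
  generalize v i.castSucc j = t at *
  generalize v i.succ j = b at *
  cases l <;> cases r <;> cases t <;> cases b <;> simp [weight] at * <;> grind

end Gauge

section SparsePolynomials

open Polynomial

variable {R S : Type*} [CommRing R] [CommRing S]

/-- Polynomials of degree less than `3 * m` whose coefficients at the exponents congruent to `2`
modulo `3` vanish. -/
def sparsePoly (R : Type*) [CommRing R] (m : ℕ) : Submodule R R[X] where
  carrier := {P | ∀ k, 3 * m ≤ k ∨ k % 3 = 2 → P.coeff k = 0}
  add_mem' hP hQ k hk := by rw [coeff_add, hP k hk, hQ k hk, add_zero]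
  zero_mem' k _ := coeff_zero k
  smul_mem' c P hP k hk := by rw [coeff_smul, hP k hk, smul_zero]

theorem map_mem_sparsePoly (f : R →+* S) {m : ℕ} {P : R[X]} (h : P ∈ sparsePoly R m) :
    P.map f ∈ sparsePoly S m := fun k hk => by
  rw [coeff_map, h k hk, map_zero]

theorem natDegree_lt_of_mem_sparsePoly {m : ℕ} {P : R[X]} (h : P ∈ sparsePoly R (m + 1)) :
    P.natDegree < 3 * (m + 1) := by
  have hdeg : P.natDegree ≤ 3 * m + 2 :=
    natDegree_le_iff_coeff_eq_zero.2 fun k hk => h k (.inl (by omega))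
  omega

theorem sum_range_three_mul {M : Type*} [AddCommMonoid M] (f : ℕ → M) (m : ℕ) :
    ∑ i ∈ range (3 * m), f i =
      ∑ k ∈ range m, (f (3 * k) + f (3 * k + 1) + f (3 * k + 2)) := by
  induction m with
  | zero => rfl
  | succ m ih => simp only [sum_range_succ, Nat.mul_succ, ih, add_assoc]

theorem eval_add_eval_add_eval {ω : R} (hω : ω ^ 2 + ω + 1 = 0) {m : ℕ} {P : R[X]}
    (hP : P.natDegree < 3 * m) (z : R) :
    P.eval z + ω * P.eval (ω * z) + ω ^ 2 * P.eval (ω ^ 2 * z) =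
      3 * z ^ 2 * ∑ k ∈ range m, P.coeff (3 * k + 2) * (z ^ 3) ^ k := by
  have hω3 : ω ^ 3 = 1 := by linear_combination (ω - 1) * hω
  simp only [eval_eq_sum_range' hP, sum_range_three_mul, mul_sum, ← sum_add_distrib]
  refine sum_congr rfl fun k _ => ?_
  have h₁ : ω ^ (3 * k) = 1 := by rw [pow_mul, hω3, one_pow]
  have h₂ : (ω ^ 2) ^ (3 * k) = 1 := by rw [pow_right_comm, h₁, one_pow]
  simp only [mul_pow, pow_add, h₁, h₂]
  rw [← pow_mul z 3]
  linear_combination (P.coeff (3 * k) * z ^ (3 * k) + P.coeff (3 * k + 1) * z ^ (3 * k) *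
    z * (ω ^ 2 - ω + 1) + P.coeff (3 * k + 2) * z ^ (3 * k) * z ^ 2 * (ω - 1) *
    (ω ^ 3 + 2)) * hω

theorem eval_add_eval_add_eval_eq_zero {ω : R} (hω : ω ^ 2 + ω + 1 = 0) {m : ℕ} {P : R[X]}
    (hP : P ∈ sparsePoly R (m + 1)) (z : R) :
    P.eval z + ω * P.eval (ω * z) + ω ^ 2 * P.eval (ω ^ 2 * z) = 0 := by
  rw [eval_add_eval_add_eval hω (natDegree_lt_of_mem_sparsePoly hP),
    sum_eq_zero fun k _ => by rw [hP _ (.inr (by omega)), zero_mul], mul_zero]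

theorem mem_sparsePoly_of_eval [IsDomain R] (h3 : (3 : R) ≠ 0) {ω : R} (hω : ω ^ 2 + ω + 1 = 0)
    {m : ℕ} {P : R[X]} (hP : P.natDegree < 3 * m) {z : Fin m → R} (hz0 : ∀ j, z j ≠ 0)
    (hz : Function.Injective fun j => z j ^ 3)
    (h : ∀ j, P.eval (z j) + ω * P.eval (ω * z j) + ω ^ 2 * P.eval (ω ^ 2 * z j) = 0) :
    P ∈ sparsePoly R m := by
  have hcoeff : (fun k : Fin m => P.coeff (3 * k + 2)) = 0 :=
    Matrix.eq_zero_of_forall_index_sum_mul_pow_eq_zero hz fun j => by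
      simpa [eval_add_eval_add_eval hω hP, h3, hz0 j, sum_range] using h j
  intro k hk
  rcases lt_or_ge k (3 * m) with hkm | hkm
  · rw [show k = 3 * (k / 3) + 2 by omega]
    exact congrFun hcoeff ⟨k / 3, by omega⟩
  · exact coeff_eq_zero_of_natDegree_lt (by omega)

theorem card_support_le_of_mem_sparsePoly {m : ℕ} {P : R[X]} (h : P ∈ sparsePoly R m) :
    #P.support ≤ 2 * m := by
  have hsupport : P.support ⊆ (range (3 * m)).filter (· % 3 ≠ 2) := fun k hk => by
    rw [mem_filter, mem_range]
    by_contra hc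
    exact mem_support_iff.1 hk (h k (by omega))
  refine (card_le_card hsupport).trans ?_
  rw [card_filter, sum_range_three_mul]
  exact (sum_congr rfl fun k _ => by
    rw [if_pos (by omega), if_pos (by omega), if_neg (by omega)]).trans_le (by simp [mul_comm])

theorem X_pow_three_sub_C_mul_mem_sparsePoly {m : ℕ} {P : R[X]} (h : P ∈ sparsePoly R m) (c : R) :
    (X ^ 3 - C c) * P ∈ sparsePoly R (m + 1) := by
  intro k hk
  rw [sub_mul, coeff_sub, coeff_C_mul, coeff_X_pow_mul', h k (by omega), mul_zero, sub_zero]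
  split_ifs
  · exact h _ (by omega)
  · rfl

theorem mem_sparsePoly_of_X_pow_three_sub_one_mul_mem {m : ℕ} {P : R[X]}
    (h : (X ^ 3 - 1) * P ∈ sparsePoly R (m + 1)) : P ∈ sparsePoly R m := by
  intro k hk
  have hstep : ∀ j, P.coeff (k + 3 * j) = P.coeff (k + 3 * (j + 1)) := fun j => by
    have hcoeff := h (k + 3 * j + 3) (by omega)
    rwa [sub_mul, one_mul, coeff_sub, coeff_X_pow_mul, sub_eq_zero] at hcoeff
  have hconst : ∀ j, P.coeff k = P.coeff (k + 3 * j) := fun j => by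
    induction j with
    | zero => rfl
    | succ j ih => rw [ih, hstep]
  rw [hconst (P.natDegree + 1)]
  exact coeff_eq_zero_of_natDegree_lt (by omega)

end SparsePolynomials

section CubicPolynomial

open Polynomial

variable {R S : Type*} [CommRing R] [CommRing S]

theorem natDegree_rowZ_le {n : ℕ} {w : Fin n → VertexWeight R[X]}
    (hw : ∀ j l t r b, (w j l t r b).natDegree ≤ 1) (l r : Bool) (t b : Fin n → Bool) :
    (rowZ w l r t b).natDegree ≤ n := by
  refine natDegree_sum_le_of_forall_le _ _ fun h _ => ?_
  split_ifs
  · exact (natDegree_prod_le _ _).trans ((sum_le_sum fun j _ => hw j _ _ _ _).trans (by simp))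
  · simp

theorem natDegree_prod_X_sub_C_le {n : ℕ} (x : Fin n → R) :
    (∏ i, (X - C (x i))).natDegree ≤ n :=
  (natDegree_prod_le _ _).trans ((sum_le_sum fun i _ => natDegree_X_sub_C_le _).trans (by simp))

theorem natDegree_cubicWeights_le (ω y : R) (l t r b : Bool) :
    ((cubicWeights (C ω) X (C y)).weight l t r b).natDegree ≤ 1 := by
  cases l <;> cases t <;> cases r <;> cases b <;>
    simp only [SixVertexWeights.weight, cubicWeights] <;> compute_degree!

/-- The partition function as a polynomial in an additional first row parameter. -/
noncomputable def rowPoly (ω : R) {n : ℕ} (x : Fin n → R) (y : Fin (n + 1) → R) : R[X] :=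
  cubicZ (C ω) (Fin.cons X fun i => C (x i)) fun j => C (y j)

theorem natDegree_rowPoly_le (ω : R) {n : ℕ} (x : Fin n → R) (y : Fin (n + 1) → R) :
    (rowPoly ω x y).natDegree ≤ n + 1 := by
  rw [rowPoly, cubicZ, dwZ, latticeZ_succ]
  refine natDegree_sum_le_of_forall_le _ _ fun s _ => natDegree_mul_le_of_le (n := 0)
    (natDegree_rowZ_le (fun j => natDegree_cubicWeights_le ω (y j)) _ _ _ _) ?_
  have hC := map_latticeZ (C : R →+* R[X]) (fun i j => (cubicWeights ω (x i) (y j)).weight)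
    (fun _ => false) (fun _ => true) s fun _ => true
  simp only [SixVertexWeights.map_weight, map_cubicWeights] at hC
  simp only [Fin.cons_succ, ← hC, natDegree_C, le_refl]

theorem eval_rowPoly (ω : R) {n : ℕ} (x : Fin n → R) (y : Fin (n + 1) → R) (z : R) :
    (rowPoly ω x y).eval z = cubicZ ω (Fin.cons z x) y := by
  rw [rowPoly, ← coe_evalRingHom, map_cubicZ]
  simp only [coe_evalRingHom, eval_C]
  congr 1
  ext i
  cases i using Fin.cases <;> simp

theorem map_rowPoly (f : R →+* S) (ω : R) {n : ℕ} (x : Fin n → R) (y : Fin (n + 1) → R) :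
    (rowPoly ω x y).map f = rowPoly (f ω) (fun i => f (x i)) (fun j => f (y j)) := by
  rw [rowPoly, ← coe_mapRingHom, map_cubicZ, rowPoly]
  simp only [coe_mapRingHom, map_C]
  congr 1
  ext1 i
  cases i using Fin.cases <;> simp

theorem rowPoly_comp_right {ω : R} (hω : ω ^ 2 + ω + 1 = 0) {n : ℕ} (x : Fin n → R)
    (y : Fin (n + 1) → R) (σ : Equiv.Perm (Fin (n + 1))) :
    rowPoly ω x (y ∘ σ) = rowPoly ω x y :=
  cubicZ_comp_right (by rw [← C_pow, ← C_add, ← C_1, ← C_add, hω, C_0]) _ (fun j => C (y j)) σ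

/-- The partition function as a polynomial in an additional first row parameter, multiplied by the
linear factors that vanish at the other parameters; these factors make it sparse. -/
noncomputable def cubicPoly (ω : R) {n : ℕ} (x : Fin n → R) (y : Fin (n + 1) → R) : R[X] :=
  rowPoly ω x y * ((∏ i, (X - C (x i))) * ∏ j, (X - C (y j)))

theorem natDegree_cubicPoly_lt (ω : R) {n : ℕ} (x : Fin n → R) (y : Fin (n + 1) → R) :
    (cubicPoly ω x y).natDegree < 3 * (n + 1) :=
  (natDegree_mul_le_of_le (natDegree_rowPoly_le ω x y) (natDegree_mul_le_of_le
    (natDegree_prod_X_sub_C_le x) (natDegree_prod_X_sub_C_le y))).trans_lt (by omega)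

theorem eval_cubicPoly (ω : R) {n : ℕ} (x : Fin n → R) (y : Fin (n + 1) → R) (z : R) :
    (cubicPoly ω x y).eval z =
      cubicZ ω (Fin.cons z x) y * ((∏ i, (z - x i)) * ∏ j, (z - y j)) := by
  simp only [cubicPoly, eval_mul, eval_rowPoly, eval_prod, eval_sub, eval_X, eval_C]

theorem map_cubicPoly (f : R →+* S) (ω : R) {n : ℕ} (x : Fin n → R) (y : Fin (n + 1) → R) :
    (cubicPoly ω x y).map f = cubicPoly (f ω) (fun i => f (x i)) (fun j => f (y j)) := by
  simp only [cubicPoly, Polynomial.map_mul, map_rowPoly, Polynomial.map_prod, Polynomial.map_sub,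
    map_X, map_C]

theorem cubicPoly_comp_right {ω : R} (hω : ω ^ 2 + ω + 1 = 0) {n : ℕ} (x : Fin n → R)
    (y : Fin (n + 1) → R) (σ : Equiv.Perm (Fin (n + 1))) :
    cubicPoly ω x (y ∘ σ) = cubicPoly ω x y := by
  simp only [cubicPoly, rowPoly_comp_right hω, ← Equiv.prod_comp σ fun j => X - C (y j),
    Function.comp_apply]

theorem cubicZ_cons_omega_mul {ω : R} (hω : ω ^ 2 + ω + 1 = 0) {n : ℕ} (x : Fin n → R)
    (y : Fin (n + 1) → R) :
    cubicZ ω (Fin.cons (ω * y 0) x) y =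
      (1 - ω ^ 2) * (∏ j : Fin n, (ω * y 0 - ω ^ 2 * y j.succ)) *
        (∏ i, (x i - ω ^ 2 * y 0)) * cubicZ ω x fun j => y j.succ := by
  refine (dwZ_corner _ ?_).trans (by simp [cubicZ])
  simp only [Fin.cons_zero, cubicWeights_a]
  linear_combination (1 - ω) * y 0 * hω

theorem cubicZ_cons_omega_sq_mul {ω : R} (hω : ω ^ 2 + ω + 1 = 0) {n : ℕ} (x : Fin n → R)
    (y : Fin (n + 1) → R) :
    cubicZ ω (Fin.cons (ω ^ 2 * y 0) x) y =
      (1 - ω ^ 2) * (∏ j : Fin n, (y j.succ - ω * y 0)) *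
        (∏ i, (y 0 - ω ^ 2 * x i)) * cubicZ ω x fun j => y j.succ := by
  have hω4 : ω ^ 2 * (ω ^ 2 * y 0) = ω * y 0 := by linear_combination (ω - 1) * ω * y 0 * hω
  rw [cubicZ_comm hω, cubicZ_comm hω x]
  refine (dwZ_corner _ ?_).trans ?_
  · simp only [Fin.cons_zero, cubicWeights_a, sub_self]
  · simp only [Fin.cons_zero, Fin.cons_succ, cubicWeights_b, cubicWeights_c, hω4, cubicZ]
    ring

theorem eval_cubicPoly_omega_mul {ω : R} (hω : ω ^ 2 + ω + 1 = 0) {n : ℕ} (x : Fin n → R)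
    (y : Fin (n + 1) → R) (j : Fin (n + 1)) :
    (cubicPoly ω x y).eval (ω * y j) = -ω * (cubicPoly ω x y).eval (ω ^ 2 * y j) := by
  wlog hj : j = 0 generalizing y j
  · simpa [cubicPoly_comp_right hω] using this (y ∘ Equiv.swap 0 j) 0 rfl
  subst hj
  simp only [eval_cubicPoly, cubicZ_cons_omega_mul hω, cubicZ_cons_omega_sq_mul hω,
    Fin.prod_univ_succ fun j => _ - y j]
  have hfactors : ∀ i : Fin n, (ω * y 0 - ω ^ 2 * y i.succ) * (x i - ω ^ 2 * y 0) *
      ((ω * y 0 - x i) * (ω * y 0 - y i.succ)) = (y i.succ - ω * y 0) * (y 0 - ω ^ 2 * x i) *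
      ((ω ^ 2 * y 0 - x i) * (ω ^ 2 * y 0 - y i.succ)) := fun i => by
    grind
  have hprod := prod_congr (s₁ := univ) rfl fun i _ => hfactors i
  simp only [prod_mul_distrib] at hprod
  linear_combination (1 - ω ^ 2) * (cubicZ ω x fun j => y j.succ) * (ω * y 0 - y 0) * hprod +
    (1 - ω ^ 2) * (cubicZ ω x fun j => y j.succ) * ((ω - 1) * y 0) * hω *
    ((∏ i : Fin n, (y i.succ - ω * y 0)) * (∏ i, (y 0 - ω ^ 2 * x i)) *
      ((∏ i, (ω ^ 2 * y 0 - x i)) * ∏ i : Fin n, (ω ^ 2 * y 0 - y i.succ)))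

theorem cubicPoly_mem_sparsePoly_of_isDomain [IsDomain R] (h3 : (3 : R) ≠ 0) {ω : R}
    (hω : ω ^ 2 + ω + 1 = 0) {n : ℕ} (x : Fin n → R) {y : Fin (n + 1) → R}
    (hy0 : ∀ j, y j ≠ 0) (hy : Function.Injective fun j => y j ^ 3) :
    cubicPoly ω x y ∈ sparsePoly R (n + 1) := by
  refine mem_sparsePoly_of_eval h3 hω (natDegree_cubicPoly_lt ω x y) hy0 hy fun j => ?_
  have hroot : (cubicPoly ω x y).eval (y j) = 0 := by
    rw [eval_cubicPoly, prod_eq_zero (mem_univ j) (sub_self (y j)), mul_zero, mul_zero]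
  rw [hroot, eval_cubicPoly_omega_mul hω]
  ring

-- Generic column parameters satisfy the nondegeneracy conditions and specialise to any others.
theorem cubicPoly_mem_sparsePoly [IsDomain R] (h3 : (3 : R) ≠ 0) {ω : R}
    (hω : ω ^ 2 + ω + 1 = 0) {n : ℕ} (x : Fin n → R) (y : Fin (n + 1) → R) :
    cubicPoly ω x y ∈ sparsePoly R (n + 1) := by
  have h3' : (3 : MvPolynomial (Fin (n + 1)) R) ≠ 0 := by
    rw [← map_ofNat MvPolynomial.C, ← map_zero MvPolynomial.C]
    exact (MvPolynomial.C_injective _ _).ne h3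
  have hinj : Function.Injective fun j : Fin (n + 1) => (MvPolynomial.X j : MvPolynomial _ R) ^ 3 :=
    fun i j hij => by
      by_contra hne
      have := congrArg (MvPolynomial.eval (Pi.single i (1 : R))) hij
      simp [Pi.single_eq_of_ne' hne] at this
  have hgeneric := cubicPoly_mem_sparsePoly_of_isDomain h3' (ω := MvPolynomial.C ω)
    (by rw [← map_pow, ← map_add, ← map_one MvPolynomial.C, ← map_add, hω, map_zero])
    (fun i => MvPolynomial.C (x i)) MvPolynomial.X_ne_zero hinj
  simpa [map_cubicPoly] using map_mem_sparsePoly (MvPolynomial.eval y) hgeneric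

end CubicPolynomial

section Uniqueness

open Polynomial

theorem coeff_X_mul_derivative_sub {R : Type*} [CommRing R] (P : R[X]) (e j : ℕ) :
    (X * derivative P - C (e : R) * P).coeff j = (j - e) * P.coeff j := by
  cases j with
  | zero => simp
  | succ j => simp [coeff_X_mul, coeff_derivative]; ring

-- Induction on `k`: the operator `X * derivative - e` deletes the term of degree `e` and lowers the
-- multiplicity of the root `1` by at most one.
theorem eq_zero_of_X_sub_one_pow_dvd {R : Type*} [CommRing R] [IsDomain R] [CharZero R] {k : ℕ}
    {P : R[X]} (hcard : #P.support ≤ k) (hdvd : (X - 1) ^ k ∣ P) : P = 0 := by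
  induction k generalizing P with
  | zero => simpa using hcard
  | succ k ih =>
    by_contra hP
    obtain ⟨e, he⟩ := nonempty_support_iff.2 hP
    have hsupport : (X * derivative P - C (e : R) * P).support ⊆ P.support.erase e := fun j hj => by
      rw [mem_support_iff, coeff_X_mul_derivative_sub] at hj
      exact mem_erase.2 ⟨fun h => hj (by simp [h]), mem_support_iff.2 (right_ne_zero_of_mul hj)⟩
    have hzero : X * derivative P - C (e : R) * P = 0 :=
      ih ((card_le_card hsupport).trans (by rw [card_erase_of_mem he]; omega))
        (dvd_sub (Dvd.dvd.mul_left (pow_sub_one_dvd_derivative_of_pow_dvd hdvd) _)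
          (Dvd.dvd.mul_left ((pow_dvd_pow _ k.le_succ).trans hdvd) _))
    have hmonomial : P = monomial e (P.coeff e) := by
      ext j
      rcases eq_or_ne e j with rfl | hj
      · rw [coeff_monomial, if_pos rfl]
      · have := coeff_X_mul_derivative_sub P e j
        rw [hzero, coeff_zero, eq_comm, mul_eq_zero, sub_eq_zero, Nat.cast_inj] at this
        rw [coeff_monomial, if_neg hj, this.resolve_left hj.symm]
    have hroot : P.IsRoot 1 := dvd_iff_isRoot.1 ((dvd_pow_self _ k.succ_ne_zero).trans hdvd)
    rw [hmonomial, IsRoot, eval_monomial, one_pow, mul_one] at hroot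
    exact mem_support_iff.1 he hroot

variable {K : Type*} [Field K] [CharZero K]

theorem X_pow_three_sub_one_dvd {ω : K} (hω : ω ^ 2 + ω + 1 = 0) {P : K[X]}
    (h₀ : P.eval 1 = 0) (h₁ : P.eval ω = 0) (h₂ : P.eval (ω ^ 2) = 0) : X ^ 3 - 1 ∣ P := by
  have hω1 : 1 - ω ≠ 0 := fun h => by
    have : (3 : K) = 0 := by linear_combination hω + (ω + 2) * h
    norm_num at this
  have hω0 : ω ≠ 0 := by rintro rfl; simp at hω
  have hω2 : 1 - ω ^ 2 = -ω ^ 2 * (1 - ω) := by linear_combination (1 - ω) * hω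
  have hfactor : (X ^ 3 - 1 : K[X]) = (X - C 1) * (X - C ω) * (X - C (ω ^ 2)) := by
    have hCω : (C ω : K[X]) ^ 2 + C ω + 1 = 0 := by rw [← C_pow, ← C_add, ← C_1, ← C_add, hω, C_0]
    rw [C_1, C_pow]
    linear_combination (X - 1) * (X - C ω + 1) * hCω
  rw [hfactor]
  refine (IsCoprime.mul_left ?_ ?_).mul_dvd
    ((isCoprime_X_sub_C_of_isUnit_sub hω1.isUnit).mul_dvd ?_ ?_) ?_
  · exact isCoprime_X_sub_C_of_isUnit_sub (hω2 ▸ (by simp [hω0, hω1] : IsUnit _))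
  · refine isCoprime_X_sub_C_of_isUnit_sub ?_
    rw [show ω - ω ^ 2 = ω * (1 - ω) by ring]
    exact (mul_ne_zero hω0 hω1).isUnit
  all_goals exact dvd_iff_isRoot.2 ‹_›

theorem exists_of_X_sub_one_pow_mul_mem {ω : K} (hω : ω ^ 2 + ω + 1 = 0) {k m : ℕ} {Q : K[X]}
    (hQ : (X - 1) ^ k * Q ∈ sparsePoly K (m + 1)) (h₀ : Q.eval 1 = 0) (h₁ : Q.eval ω = 0) :
    ∃ T, (X - 1) ^ k * T ∈ sparsePoly K m ∧ Q = (X ^ 3 - 1) * T := by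
  have h₂ : Q.eval (ω ^ 2) = 0 := by
    have hsum := eval_add_eval_add_eval_eq_zero hω hQ 1
    have hne : ω ≠ 0 ∧ ω ^ 2 - 1 ≠ 0 := by
      constructor <;> intro h
      · simp [h] at hω
      · have : (3 : K) = 0 := by linear_combination (2 - ω) * hω + (ω - 1) * h
        norm_num at this
    simpa [h₀, h₁, hne] using hsum
  obtain ⟨T, rfl⟩ := X_pow_three_sub_one_dvd hω h₀ h₁ h₂
  exact ⟨T, mem_sparsePoly_of_X_pow_three_sub_one_mul_mem (mul_left_comm _ _ T ▸ hQ), rfl⟩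

theorem C_eval_one_mul_eq {k m : ℕ} (hk : 2 * m ≤ k + 1) {P Q : K[X]}
    (hP : (X - 1) ^ k * P ∈ sparsePoly K m) (hQ : (X - 1) ^ k * Q ∈ sparsePoly K m) :
    C (P.eval 1) * Q = C (Q.eval 1) * P := by
  have hmem : (X - 1) ^ k * (C (P.eval 1) * Q - C (Q.eval 1) * P) ∈ sparsePoly K m := by
    have := sub_mem ((sparsePoly K m).smul_mem (P.eval 1) hQ)
      ((sparsePoly K m).smul_mem (Q.eval 1) hP)
    rw [smul_eq_C_mul, smul_eq_C_mul] at this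
    convert this using 1
    ring
  have hroot : X - 1 ∣ C (P.eval 1) * Q - C (Q.eval 1) * P := by
    rw [← C_1, dvd_iff_isRoot]
    simp [mul_comm]
  have hzero := eq_zero_of_X_sub_one_pow_dvd ((card_support_le_of_mem_sparsePoly hmem).trans hk)
    (pow_succ (X - 1 : K[X]) k ▸ mul_dvd_mul_left _ hroot)
  exact sub_eq_zero.1 ((mul_eq_zero.1 hzero).resolve_left (pow_ne_zero _ (X_sub_C_ne_zero 1)))

theorem eq_zero_of_X_sub_one_pow_mul_mem {ω : K} (hω : ω ^ 2 + ω + 1 = 0) {k m : ℕ}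
    (hk : 2 * m ≤ k + 1) {P Q : K[X]} (hP : (X - 1) ^ k * P ∈ sparsePoly K m)
    (hQ : (X - 1) ^ k * Q ∈ sparsePoly K (m + 1)) {c : K} (hc : c ^ 3 ≠ 1) (hP1 : P.eval 1 ≠ 0)
    (hPc : P.eval c ≠ 0) (hQ1 : Q.eval 1 = 0) (hQω : Q.eval ω = 0) (hQc : Q.eval c = 0) :
    Q = 0 := by
  obtain ⟨T, hT, rfl⟩ := exists_of_X_sub_one_pow_mul_mem hω hQ hQ1 hQω
  have hTc : T.eval c = 0 := by simpa [sub_eq_zero, hc] using hQc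
  have hPT := C_eval_one_mul_eq hk hP hT
  have hT1 : T.eval 1 = 0 := by simpa [hTc, hPc] using congrArg (eval c) hPT
  have hT0 : T = 0 := by simpa [hT1, hP1] using hPT
  rw [hT0, mul_zero]

end Uniqueness

section CubicIdentity

variable {R : Type*} [CommRing R]

/-- The partition function of size `m + 1` with one row parameter `a` and all other parameters
equal to `1`. -/
def singlyZ (ω : R) (m : ℕ) (a : R) : R := cubicZ ω (n := m + 1) (Fin.cons a 1) 1

/-- The partition function of size `m + 2` with row parameters `a`, `b`, column parameter `c`, and
all other parameters equal to `1`. -/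
def triplyZ (ω : R) (m : ℕ) (a b c : R) : R :=
  cubicZ ω (n := m + 2) (Fin.cons a (Fin.cons b 1)) (Fin.cons c 1)

/-- The partition function of size `m + 2` with row parameters `a`, `b` and all other parameters
equal to `1`. -/
def doublyZ (ω : R) (m : ℕ) (a b : R) : R := cubicZ ω (n := m + 2) (Fin.cons a (Fin.cons b 1)) 1

theorem cons_cons_comp_swap {α : Type*} {m : ℕ} (a b : α) (x : Fin m → α) :
    (Fin.cons a (Fin.cons b x) : Fin (m + 2) → α) ∘ Equiv.swap 0 1 =
      Fin.cons b (Fin.cons a x) := by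
  ext i
  cases i using Fin.cases with
  | zero => simp
  | succ i =>
    cases i using Fin.cases with
    | zero => simp
    | succ i =>
      rw [Function.comp_apply,
        Equiv.swap_apply_of_ne_of_ne (Fin.succ_ne_zero _) (by simp [Fin.ext_iff])]
      simp

theorem cons_one_one (m : ℕ) : (Fin.cons 1 1 : Fin (m + 1) → R) = 1 := by
  ext i
  cases i using Fin.cases <;> simp

theorem triplyZ_comm {ω : R} (hω : ω ^ 2 + ω + 1 = 0) (m : ℕ) (a b c : R) :
    triplyZ ω m a b c = triplyZ ω m b a c := by
  rw [triplyZ, ← cubicZ_comp_left hω _ _ (Equiv.swap 0 1), cons_cons_comp_swap, triplyZ]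

theorem doublyZ_one_left {ω : R} (hω : ω ^ 2 + ω + 1 = 0) (m : ℕ) (a : R) :
    doublyZ ω m 1 a = singlyZ ω (m + 1) a := by
  rw [doublyZ, ← cubicZ_comp_left hω _ _ (Equiv.swap 0 1), cons_cons_comp_swap, cons_one_one,
    singlyZ]

theorem singlyZ_omega {ω : R} (hω : ω ^ 2 + ω + 1 = 0) (m : ℕ) :
    singlyZ ω (m + 1) ω = (1 - ω ^ 2) ^ (m + 2) * (ω - ω ^ 2) ^ (m + 1) * singlyZ ω m 1 := by
  have h := cubicZ_cons_omega_mul hω (1 : Fin (m + 1) → R) 1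
  simp only [Pi.one_apply, mul_one, prod_const, card_univ, Fintype.card_fin, ← Pi.one_def] at h
  rw [singlyZ, h, singlyZ, cons_one_one]
  ring

theorem triplyZ_omega_one {ω : R} (hω : ω ^ 2 + ω + 1 = 0) (m : ℕ) (c : R) :
    triplyZ ω (m + 1) ω 1 c = (1 - ω ^ 2) ^ (m + 3) * (ω - ω ^ 2) ^ (m + 1) * (ω - ω ^ 2 * c) *
      singlyZ ω (m + 1) c := by
  have hswap : (Fin.cons c 1 : Fin (m + 3) → R) ∘ Equiv.swap 0 1 = Fin.cons 1 (Fin.cons c 1) := by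
    rw [← cons_one_one (m + 1), cons_cons_comp_swap]
  have h := cubicZ_cons_omega_mul hω (1 : Fin (m + 2) → R) (Fin.cons 1 (Fin.cons c 1))
  simp only [Fin.cons_zero, Fin.cons_succ, Fin.prod_univ_succ (n := m + 1), Pi.one_apply, mul_one,
    prod_const, card_univ, Fintype.card_fin] at h
  rw [triplyZ, cons_one_one, ← cubicZ_comp_right hω _ _ (Equiv.swap 0 1), hswap, h,
    cubicZ_comm hω, singlyZ]
  ring

/-- The difference of the two sides of `triplyZ_identity`, with the linear factors that make it
sparse as a polynomial in `a`, up to a power of `a - 1`. -/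
def cubicDefect (ω : R) (m : ℕ) (c a b : R) : R :=
  (a - c) * (b - c) * (ω * singlyZ ω m 1 * (1 - c) * (a - b) * triplyZ ω (m + 1) a b c +
    (b ^ 2 + b + 1) * (a ^ 2 + a * c + c ^ 2) * singlyZ ω (m + 1) a * doublyZ ω m b c -
    (a ^ 2 + a + 1) * (b ^ 2 + b * c + c ^ 2) * singlyZ ω (m + 1) b * doublyZ ω m a c)

theorem cubicDefect_swap {ω : R} (hω : ω ^ 2 + ω + 1 = 0) (m : ℕ) (c a b : R) :
    cubicDefect ω m c a b = -cubicDefect ω m c b a := by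
  rw [cubicDefect, cubicDefect, triplyZ_comm hω (m + 1) a b]
  ring

theorem cubicDefect_self (ω : R) (m : ℕ) (c a : R) : cubicDefect ω m c a a = 0 := by
  rw [cubicDefect]
  ring

theorem cubicDefect_omega_one {ω : R} (hω : ω ^ 2 + ω + 1 = 0) (m : ℕ) (c : R) :
    cubicDefect ω m c ω 1 = 0 := by
  have hcoeff : ω * (1 - c) * (ω - 1) * (1 - ω ^ 2) * (ω - ω ^ 2 * c) +
      3 * (ω ^ 2 + ω * c + c ^ 2) = 0 := by
    grind
  rw [cubicDefect, triplyZ_omega_one hω, singlyZ_omega hω, doublyZ_one_left hω, hω]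
  linear_combination (ω - c) * (1 - c) * (1 - ω ^ 2) ^ (m + 2) * (ω - ω ^ 2) ^ (m + 1) *
    singlyZ ω m 1 * singlyZ ω (m + 1) c * hcoeff

open Polynomial in
/-- `cubicDefect` as a polynomial in its argument `a`. -/
noncomputable def cubicDefectPoly (ω : R) (m : ℕ) (c b : R) : R[X] :=
  C (ω * singlyZ ω m 1 * (1 - c) * (b - c)) *
      ((X - C b) * (X - C c) * rowPoly ω (Fin.cons b 1) (Fin.cons c (1 : Fin (m + 2) → R))) +
    C ((b ^ 2 + b + 1) * (b - c) * doublyZ ω m b c) *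
      ((X ^ 3 - C (c ^ 3)) * rowPoly ω 1 (1 : Fin (m + 2) → R)) -
    C ((b ^ 2 + b * c + c ^ 2) * (b - c) * singlyZ ω (m + 1) b) *
      ((X ^ 2 + X + 1) * (X - C c) * rowPoly ω (Fin.cons c 1) (1 : Fin (m + 2) → R))

open Polynomial in
theorem eval_cubicDefectPoly (ω : R) (m : ℕ) (c b a : R) :
    (cubicDefectPoly ω m c b).eval a = cubicDefect ω m c a b := by
  simp only [cubicDefectPoly, eval_add, eval_sub, eval_mul, eval_C, eval_X, eval_pow, eval_one,
    eval_rowPoly, cubicDefect, triplyZ, doublyZ, singlyZ]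
  ring

open Polynomial in
theorem X_sub_one_pow_mul_rowPoly_mem_sparsePoly [IsDomain R] (h3 : (3 : R) ≠ 0) {ω : R}
    (hω : ω ^ 2 + ω + 1 = 0) (m : ℕ) :
    (X - 1) ^ (2 * m + 3) * rowPoly ω 1 (1 : Fin (m + 2) → R) ∈ sparsePoly R (m + 2) := by
  have h := cubicPoly_mem_sparsePoly h3 hω (1 : Fin (m + 1) → R) 1
  simp only [cubicPoly, Pi.one_apply, prod_const, card_univ, Fintype.card_fin, C_1] at h
  convert h using 1
  ring

open Polynomial in
theorem X_sub_one_pow_mul_cubicDefectPoly_mem_sparsePoly [IsDomain R] (h3 : (3 : R) ≠ 0) {ω : R}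
    (hω : ω ^ 2 + ω + 1 = 0) (m : ℕ) (c b : R) :
    (X - 1) ^ (2 * m + 3) * cubicDefectPoly ω m c b ∈ sparsePoly R (m + 3) := by
  have hS := X_sub_one_pow_mul_rowPoly_mem_sparsePoly h3 hω m
  have hO := cubicPoly_mem_sparsePoly h3 hω (Fin.cons c (1 : Fin m → R)) 1
  have hT := cubicPoly_mem_sparsePoly h3 hω (Fin.cons b (1 : Fin (m + 1) → R)) (Fin.cons c 1)
  simp only [cubicPoly, Fin.prod_univ_succ (n := m), Fin.prod_univ_succ (n := m + 1),
    Fin.prod_univ_succ (n := m + 2), Fin.cons_zero, Fin.cons_succ, Pi.one_apply, prod_const,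
    card_univ, Fintype.card_fin, C_1] at hO hT
  have h := sub_mem (add_mem ((sparsePoly R (m + 3)).smul_mem
      (ω * singlyZ ω m 1 * (1 - c) * (b - c)) hT)
    ((sparsePoly R (m + 3)).smul_mem ((b ^ 2 + b + 1) * (b - c) * doublyZ ω m b c)
      (X_pow_three_sub_C_mul_mem_sparsePoly hS (c ^ 3))))
    ((sparsePoly R (m + 3)).smul_mem ((b ^ 2 + b * c + c ^ 2) * (b - c) * singlyZ ω (m + 1) b)
      (X_pow_three_sub_C_mul_mem_sparsePoly hO 1))
  simp only [smul_eq_C_mul, C_1] at h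
  convert h using 1
  rw [cubicDefectPoly]
  ring

variable {K : Type*} [Field K] [CharZero K]

theorem cubicDefect_eq_zero_of_roots {ω : K} (hω : ω ^ 2 + ω + 1 = 0) {m : ℕ} {c : K}
    (hc : c ^ 3 ≠ 1) (hS₁ : singlyZ ω (m + 1) 1 ≠ 0) (hSc : singlyZ ω (m + 1) c ≠ 0) {b : K}
    (h₁ : cubicDefect ω m c 1 b = 0) (h_omega : cubicDefect ω m c ω b = 0) (a : K) :
    cubicDefect ω m c a b = 0 := by
  have hQ : cubicDefectPoly ω m c b = 0 :=
    eq_zero_of_X_sub_one_pow_mul_mem hω (by omega)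
      (X_sub_one_pow_mul_rowPoly_mem_sparsePoly three_ne_zero hω m)
      (X_sub_one_pow_mul_cubicDefectPoly_mem_sparsePoly three_ne_zero hω m c b) hc
      (by rwa [eval_rowPoly]) (by rwa [eval_rowPoly]) (by rwa [eval_cubicDefectPoly])
      (by rwa [eval_cubicDefectPoly])
      (by rw [eval_cubicDefectPoly, cubicDefect, sub_self, zero_mul, zero_mul])
  rw [← eval_cubicDefectPoly, hQ, Polynomial.eval_zero]

theorem cubicDefect_eq_zero {ω : K} (hω : ω ^ 2 + ω + 1 = 0) {m : ℕ} {c : K}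
    (hc : c ^ 3 ≠ 1) (hS₁ : singlyZ ω (m + 1) 1 ≠ 0) (hSc : singlyZ ω (m + 1) c ≠ 0) (a b : K) :
    cubicDefect ω m c a b = 0 := by
  have hroots := fun b => cubicDefect_eq_zero_of_roots hω hc hS₁ hSc (b := b)
  have h₁ := hroots 1 (cubicDefect_self ω m c 1) (cubicDefect_omega_one hω m c)
  have h_omega := hroots ω (by rw [cubicDefect_swap hω, cubicDefect_omega_one hω, neg_zero])
    (cubicDefect_self ω m c ω)
  exact hroots b (by rw [cubicDefect_swap hω, h₁, neg_zero])
    (by rw [cubicDefect_swap hω, h_omega, neg_zero]) a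

theorem triplyZ_identity {ω : K} (hω : ω ^ 2 + ω + 1 = 0) {m : ℕ} {c : K}
    (hc : c ^ 3 ≠ 1) (hS₁ : singlyZ ω (m + 1) 1 ≠ 0) (hSc : singlyZ ω (m + 1) c ≠ 0) {a b : K}
    (ha : a ≠ c) (hb : b ≠ c) :
    ω * singlyZ ω m 1 * (1 - c) * (a - b) * triplyZ ω (m + 1) a b c =
      (a ^ 2 + a + 1) * (b ^ 2 + b * c + c ^ 2) * singlyZ ω (m + 1) b * doublyZ ω m a c -
      (b ^ 2 + b + 1) * (a ^ 2 + a * c + c ^ 2) * singlyZ ω (m + 1) a * doublyZ ω m b c := by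
  have h := cubicDefect_eq_zero hω hc hS₁ hSc a b
  rw [cubicDefect, mul_eq_zero_iff_left (mul_ne_zero (sub_ne_zero.2 ha) (sub_ne_zero.2 hb))] at h
  linear_combination h

end CubicIdentity

section Moebius

variable {K : Type*} [Field K] {ω : K}

/-- The denominator of `moebius ω z`, normalised to be `1` at `z = 1`. -/
def moebiusDen (ω z : K) : K := -(ω + ω ^ 2 * z)

/-- The change of spectral parameters which turns the ratios of the weights of `cubicWeights` into
the generating parameters of alternating sign matrices. It fixes `1`. -/
def moebius (ω z : K) : K := -(ω ^ 2 + ω * z) / moebiusDen ω z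

theorem moebiusDen_one (hω : ω ^ 2 + ω + 1 = 0) : moebiusDen ω 1 = 1 := by
  rw [moebiusDen]
  linear_combination -hω

theorem moebius_one (hω : ω ^ 2 + ω + 1 = 0) : moebius ω 1 = 1 := by
  rw [moebius, moebiusDen_one hω]
  linear_combination -hω

theorem moebiusDen_mul_moebius {z : K} (hz : moebiusDen ω z ≠ 0) :
    moebiusDen ω z * moebius ω z = -(ω ^ 2 + ω * z) :=
  mul_div_cancel₀ _ hz

theorem moebiusDen_mul_moebiusDen_mul_moebius_sub {z w : K} (hz : moebiusDen ω z ≠ 0)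
    (hw : moebiusDen ω w ≠ 0) :
    moebiusDen ω z * moebiusDen ω w * (moebius ω z - moebius ω w) =
      (1 - ω ^ 2) * ω ^ 2 * (z - w) := by
  have hz' := moebiusDen_mul_moebius hz
  have hw' := moebiusDen_mul_moebius hw
  calc _ = moebiusDen ω w * (moebiusDen ω z * moebius ω z) -
        moebiusDen ω z * (moebiusDen ω w * moebius ω w) := by ring
    _ = _ := by rw [hz', hw', moebiusDen, moebiusDen]; ring

theorem moebiusDen_mul_moebiusDen_mul_moebius_sub_omega_sq_mul (hω : ω ^ 2 + ω + 1 = 0) {z w : K}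
    (hz : moebiusDen ω z ≠ 0) (hw : moebiusDen ω w ≠ 0) :
    moebiusDen ω z * moebiusDen ω w * (moebius ω z - ω ^ 2 * moebius ω w) =
      (1 - ω ^ 2) * (z * w - z + 1) := by
  have hz' := moebiusDen_mul_moebius hz
  have hw' := moebiusDen_mul_moebius hw
  calc _ = moebiusDen ω w * (moebiusDen ω z * moebius ω z) -
        ω ^ 2 * moebiusDen ω z * (moebiusDen ω w * moebius ω w) := by ring
    _ = _ := by rw [hz', hw', moebiusDen, moebiusDen]; grind

theorem sq_add_mul_add_sq_of_root (hω : ω ^ 2 + ω + 1 = 0) (x y : K) :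
    x ^ 2 + x * y + y ^ 2 = -ω * (x - ω ^ 2 * y) * (y - ω ^ 2 * x) := by
  grind

theorem moebiusDen_sq_mul_moebiusDen_sq_mul_add (hω : ω ^ 2 + ω + 1 = 0) {z w : K}
    (hz : moebiusDen ω z ≠ 0) (hw : moebiusDen ω w ≠ 0) :
    moebiusDen ω z ^ 2 * moebiusDen ω w ^ 2 *
        (moebius ω z ^ 2 + moebius ω z * moebius ω w + moebius ω w ^ 2) =
      3 * (z * w - z + 1) * (z * w - w + 1) := by
  have hω3 : -ω * (1 - ω ^ 2) ^ 2 = 3 := by grind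
  have h₁ := moebiusDen_mul_moebiusDen_mul_moebius_sub_omega_sq_mul hω hz hw
  have h₂ := moebiusDen_mul_moebiusDen_mul_moebius_sub_omega_sq_mul hω hw hz
  calc _ = -ω * (moebiusDen ω z * moebiusDen ω w * (moebius ω z - ω ^ 2 * moebius ω w)) *
        (moebiusDen ω w * moebiusDen ω z * (moebius ω w - ω ^ 2 * moebius ω z)) := by
          rw [sq_add_mul_add_sq_of_root hω]
          ring
    _ = _ := by rw [h₁, h₂, ← hω3]; ring

/-- The six-vertex weights with row parameter `u` and column parameter `v`, obtained from
`cubicWeights` by the substitution `moebius` and a gauge transformation. -/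
def spectralWeights (u v : K) : SixVertexWeights K :=
  ⟨u * v - v + 1, u * v - u + 1, 1, (u ^ 2 - u + 1) * (v ^ 2 - v + 1)⟩

theorem cubicWeights_moebius_weight (hω : ω ^ 2 + ω + 1 = 0) {u v : K}
    (hu : moebiusDen ω u ≠ 0) (hv : moebiusDen ω v ≠ 0) (l t r b : Bool) :
    moebiusDen ω u * moebiusDen ω v *
        (cubicWeights ω (moebius ω u) (moebius ω v)).weight l t r b =
      (1 - ω ^ 2) * SixVertexWeights.weight ⟨u * v - v + 1, u * v - u + 1,
        moebiusDen ω u * (moebiusDen ω v * 1),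
        moebiusDen ω u * moebius ω u * (moebiusDen ω v * moebius ω v)⟩ l t r b := by
  have ha := moebiusDen_mul_moebiusDen_mul_moebius_sub_omega_sq_mul hω hv hu
  have hb := moebiusDen_mul_moebiusDen_mul_moebius_sub_omega_sq_mul hω hu hv
  cases l <;> cases t <;> cases r <;> cases b <;>
    simp only [SixVertexWeights.weight, cubicWeights] <;> grind

theorem moebiusDen_mul_moebiusDen_mul_moebius (hω : ω ^ 2 + ω + 1 = 0) {z : K}
    (hz : moebiusDen ω z ≠ 0) :
    moebiusDen ω z * (moebiusDen ω z * moebius ω z) = z ^ 2 - z + 1 := by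
  rw [moebiusDen_mul_moebius hz, moebiusDen]
  grind

theorem dwZ_mul_c {n : ℕ} (g h : Fin n → K) (a b d : Fin n → Fin n → K) :
    dwZ (fun i j => ⟨a i j, b i j, g i * (h j * 1), d i j⟩) =
      ((∏ i, g i) * ∏ j, h j) * dwZ fun i j => ⟨a i j, b i j, 1, h j * (g i * d i j)⟩ := by
  rw [mul_assoc]
  exact (dwZ_mulC_row g fun i j => ⟨a i j, b i j, h j * 1, d i j⟩).trans
    (congrArg _ (dwZ_mulC_column h fun i j => ⟨a i j, b i j, 1, g i * d i j⟩))

theorem prod_mul_cubicZ_moebius (hω : ω ^ 2 + ω + 1 = 0) {n : ℕ} {u v : Fin n → K}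
    (hu : ∀ i, moebiusDen ω (u i) ≠ 0) (hv : ∀ j, moebiusDen ω (v j) ≠ 0) :
    (∏ i, ∏ j, moebiusDen ω (u i) * moebiusDen ω (v j)) *
        cubicZ ω (fun i => moebius ω (u i)) (fun j => moebius ω (v j)) =
      (1 - ω ^ 2) ^ n ^ 2 * ((∏ i, moebiusDen ω (u i)) * ∏ j, moebiusDen ω (v j)) *
        dwZ fun i j => spectralWeights (u i) (v j) := by
  have hd : ∀ i j, moebiusDen ω (v j) * (moebiusDen ω (u i) *
      (moebiusDen ω (u i) * moebius ω (u i) * (moebiusDen ω (v j) * moebius ω (v j)))) =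
      (u i ^ 2 - u i + 1) * (v j ^ 2 - v j + 1) := fun i j => by
    rw [← moebiusDen_mul_moebiusDen_mul_moebius hω (hu i),
      ← moebiusDen_mul_moebiusDen_mul_moebius hω (hv j)]
    ring
  rw [cubicZ, dwZ, ← latticeZ_mul]
  simp only [cubicWeights_moebius_weight hω (hu _) (hv _)]
  rw [latticeZ_mul fun _ _ => 1 - ω ^ 2, ← dwZ, dwZ_mul_c]
  simp only [hd, prod_const, card_univ, Fintype.card_fin, ← pow_mul, ← sq]
  rw [← mul_assoc]
  rfl

theorem prod_pow_mul_cubicZ_moebius (hω : ω ^ 2 + ω + 1 = 0) {n : ℕ} {u v : Fin (n + 1) → K}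
    (hu : ∀ i, moebiusDen ω (u i) ≠ 0) (hv : ∀ j, moebiusDen ω (v j) ≠ 0) :
    ((∏ i, moebiusDen ω (u i)) * ∏ j, moebiusDen ω (v j)) ^ n *
        cubicZ ω (fun i => moebius ω (u i)) (fun j => moebius ω (v j)) =
      (1 - ω ^ 2) ^ (n + 1) ^ 2 * dwZ fun i j => spectralWeights (u i) (v j) := by
  have h := prod_mul_cubicZ_moebius hω hu hv
  simp only [prod_mul_distrib, prod_const, prod_pow, card_univ, Fintype.card_fin] at h
  refine mul_left_cancel₀ (mul_ne_zero (prod_ne_zero_iff (s := univ).2 fun i _ => hu i)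
    (prod_ne_zero_iff (s := univ).2 fun j _ => hv j)) ?_
  linear_combination h

end Moebius

section RefinedModel

variable {R S : Type*} [CommRing R] [CommRing S]

/-- The weights which record the positions of the `1`s in the first row by `z₁`, in the last row by
`z₂`, and in the first column by `z₃`. The exponent of `z₃` counts the `0`s below the `1`, whereas
`rhoL` counts those above it. -/
def refinedWeights {n : ℕ} (z₁ z₂ z₃ : R) (i j : Fin (n + 1)) : SixVertexWeights R :=
  ⟨(if i = 0 then z₁ else 1) * if i = Fin.last n then z₂ else 1, if j = 0 then z₃ else 1, 1, 1⟩

/-- The partition function of size `n + 1` for `refinedWeights`. -/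
def refinedZ (n : ℕ) (z₁ z₂ z₃ : R) : R :=
  dwZ fun i j : Fin (n + 1) => refinedWeights z₁ z₂ z₃ i j

/-- The partition function of size `n + 1` for `refinedWeights` with the two left corner weights
replaced by those of `spectralWeights`. -/
def spectralZ (n : ℕ) (z₁ z₂ z₃ : R) : R :=
  dwZ (n := n + 1)
    (setCorners (refinedWeights z₁ z₂ z₃) (z₁ * z₃ - z₃ + 1) (z₂ * z₃ - z₂ + 1))

theorem map_refinedWeights (f : R →+* S) {n : ℕ} (z₁ z₂ z₃ : R) (i j : Fin (n + 1)) :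
    (refinedWeights z₁ z₂ z₃ i j).map f = refinedWeights (f z₁) (f z₂) (f z₃) i j := by
  simp only [refinedWeights, SixVertexWeights.map, map_mul, apply_ite f, map_one]

theorem map_refinedZ (f : R →+* S) (n : ℕ) (z₁ z₂ z₃ : R) :
    f (refinedZ n z₁ z₂ z₃) = refinedZ n (f z₁) (f z₂) (f z₃) := by
  simp only [refinedZ, map_dwZ, map_refinedWeights]

theorem map_spectralZ (f : R →+* S) (n : ℕ) (z₁ z₂ z₃ : R) :
    f (spectralZ n z₁ z₂ z₃) = spectralZ n (f z₁) (f z₂) (f z₃) := by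
  simp only [spectralZ, map_dwZ, map_setCorners, map_refinedWeights, map_add, map_sub, map_mul,
    map_one]

theorem setCorners_refinedWeights (n : ℕ) (z₁ z₂ z₃ : R) :
    setCorners (refinedWeights (n := n + 1) z₁ z₂ z₃) z₁ z₃ = refinedWeights z₁ z₂ z₃ := by
  funext i j
  by_cases hi : i = 0 <;> by_cases hj : j = 0 <;>
    simp [setCorners, refinedWeights, hi, hj]

theorem spectralZ_one_right (n : ℕ) (z₁ z₂ : R) :
    spectralZ (n + 1) z₁ z₂ 1 = refinedZ (n + 1) z₁ z₂ 1 := by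
  rw [spectralZ, mul_one, mul_one, sub_add_cancel, sub_self, zero_add, setCorners_refinedWeights,
    refinedZ]

theorem dwZ_rotate {n : ℕ} (W : Fin n → Fin n → SixVertexWeights R) :
    dwZ W = dwZ fun i j => W i.rev j.rev := by
  rw [dwZ_flip, dwZ_transpose, dwZ_flip, dwZ_transpose]
  rfl

theorem refinedZ_swap (n : ℕ) (z₁ z₂ : R) : refinedZ n z₁ z₂ 1 = refinedZ n z₂ z₁ 1 := by
  rw [refinedZ, dwZ_rotate]
  congr 1
  funext i j
  simp only [refinedWeights, Fin.rev_eq_iff, Fin.rev_zero, Fin.rev_last, ite_self]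
  rw [mul_comm]

theorem refinedZ_eliminate (n : ℕ) (z₁ z₂ z₃ : R) :
    (z₁ * z₃ - z₃ + 1) * (z₂ * z₃ - z₂ + 1) * refinedZ (n + 2) z₁ z₂ z₃ =
      z₁ * z₃ * spectralZ (n + 2) z₁ z₂ z₃ +
      (z₂ - 1) * (z₃ - 1) * (z₁ * z₃ - z₃ + 1) * z₁ * z₂ ^ (n + 2) * refinedZ (n + 1) z₁ 1 1 +
      (z₁ - 1) * (z₃ - 1) * (z₂ * z₃ - z₂ + 1) * z₃ ^ (n + 2) * refinedZ (n + 1) z₂ 1 1 := by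
  have hleft : dwZ (setCorners (refinedWeights (n := n + 2) z₁ z₂ z₃) 1 0) =
      z₂ ^ (n + 2) * refinedZ (n + 1) z₁ 1 1 := by
    rw [dwZ_setCorners_one_zero]
    simp [refinedWeights, refinedZ]
  have hright : dwZ (setCorners (refinedWeights (n := n + 2) z₁ z₂ z₃) 0 1) =
      z₃ ^ (n + 1) * refinedZ (n + 1) z₂ 1 1 := by
    rw [dwZ_setCorners_zero_one, refinedZ_swap]
    simp [refinedWeights, refinedZ]
  have h := dwZ_setCorners_eliminate (refinedWeights (n := n + 2) z₁ z₂ z₃) z₁ z₃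
    (z₁ * z₃ - z₃ + 1) (z₂ * z₃ - z₂ + 1)
  rw [setCorners_refinedWeights, hleft, hright, ← refinedZ, ← spectralZ] at h
  rw [h]
  ring

end RefinedModel

section SpectralIdentity

theorem snoc_cons_one_apply {M : Type*} [One M] {n : ℕ} (a b : M) (i : Fin (n + 2)) :
    (Fin.snoc (Fin.cons a 1 : Fin (n + 1) → M) b : Fin (n + 2) → M) i =
      if i = 0 then a else if i = Fin.last (n + 1) then b else 1 := by
  cases i using Fin.lastCases with
  | last => simp
  | cast i =>
    rw [Fin.snoc_castSucc]
    cases i using Fin.cases <;> simp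

theorem cons_one_apply {M : Type*} [One M] {n : ℕ} (a : M) (i : Fin (n + 1)) :
    (Fin.cons a 1 : Fin (n + 1) → M) i = if i = 0 then a else 1 := by
  cases i using Fin.cases <;> simp

variable {K : Type*} [Field K] {ω : K}

theorem dwZ_spectralWeights (n : ℕ) (z₁ z₂ z₃ : K) :
    (dwZ fun i j => spectralWeights
      ((Fin.snoc (Fin.cons z₁ 1 : Fin (n + 1) → K) z₂ : Fin (n + 2) → K) i)
      ((Fin.cons z₃ 1 : Fin (n + 2) → K) j)) = spectralZ (n + 1) z₁ z₂ z₃ := by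
  simp only [snoc_cons_one_apply, cons_one_apply, spectralZ]
  apply dwZ_congr <;> intro i j <;> by_cases hi : i = 0 <;> by_cases hl : i = Fin.last (n + 1) <;>
    by_cases hj : j = 0 <;> simp_all [setCorners, refinedWeights, spectralWeights]

theorem pow_mul_triplyZ_moebius (hω : ω ^ 2 + ω + 1 = 0) (n : ℕ) {z₁ z₂ z₃ : K}
    (h₁ : moebiusDen ω z₁ ≠ 0) (h₂ : moebiusDen ω z₂ ≠ 0) (h₃ : moebiusDen ω z₃ ≠ 0) :
    (moebiusDen ω z₁ * moebiusDen ω z₂ * moebiusDen ω z₃) ^ (n + 1) *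
        triplyZ ω n (moebius ω z₁) (moebius ω z₂) (moebius ω z₃) =
      (1 - ω ^ 2) ^ (n + 2) ^ 2 * spectralZ (n + 1) z₁ z₂ z₃ := by
  have hone := moebiusDen_one hω
  have hrow : (fun i => moebius ω
      ((Fin.snoc (Fin.cons z₁ 1 : Fin (n + 1) → K) z₂ : Fin (n + 2) → K) i)) =
      Fin.cons (moebius ω z₂) (Fin.cons (moebius ω z₁) 1) ∘ finRotate (n + 2) := by
    funext i
    rw [Function.comp_apply, ← congrFun (Fin.snoc_eq_cons_rotate _ _) i, snoc_cons_one_apply,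
      snoc_cons_one_apply, apply_ite (moebius ω), apply_ite (moebius ω), moebius_one hω]
  have hcolumn : (fun j => moebius ω ((Fin.cons z₃ 1 : Fin (n + 2) → K) j)) =
      Fin.cons (moebius ω z₃) 1 := by
    funext j
    rw [cons_one_apply, cons_one_apply, apply_ite (moebius ω), moebius_one hω]
  have h := prod_pow_mul_cubicZ_moebius hω (n := n + 1)
    (u := Fin.snoc (Fin.cons z₁ 1 : Fin (n + 1) → K) z₂) (v := Fin.cons z₃ 1)
    (by intro i; rw [snoc_cons_one_apply]; split_ifs <;> simp [*])
    (by intro j; rw [cons_one_apply]; split_ifs <;> simp [*])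
  rw [hrow, hcolumn, cubicZ_comp_left hω, dwZ_spectralWeights, ← triplyZ, triplyZ_comm hω] at h
  simpa [Fin.prod_univ_castSucc (n := n + 1), Fin.prod_univ_succ, hone, mul_assoc] using h

theorem pow_mul_doublyZ_moebius (hω : ω ^ 2 + ω + 1 = 0) (n : ℕ) {z₁ z₂ : K}
    (h₁ : moebiusDen ω z₁ ≠ 0) (h₂ : moebiusDen ω z₂ ≠ 0) :
    (moebiusDen ω z₁ * moebiusDen ω z₂) ^ (n + 1) *
        doublyZ ω n (moebius ω z₁) (moebius ω z₂) =
      (1 - ω ^ 2) ^ (n + 2) ^ 2 * refinedZ (n + 1) z₁ z₂ 1 := by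
  have hone := moebiusDen_one hω
  have h := pow_mul_triplyZ_moebius hω n h₁ h₂ (hone.trans_ne one_ne_zero)
  rwa [hone, mul_one, moebius_one hω, triplyZ, cons_one_one, ← doublyZ, spectralZ_one_right] at h

theorem pow_mul_singlyZ_moebius (hω : ω ^ 2 + ω + 1 = 0) (n : ℕ) {z : K}
    (h : moebiusDen ω z ≠ 0) :
    moebiusDen ω z ^ (n + 1) * singlyZ ω (n + 1) (moebius ω z) =
      (1 - ω ^ 2) ^ (n + 2) ^ 2 * refinedZ (n + 1) z 1 1 := by
  have hone := moebiusDen_one hω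
  have h := pow_mul_doublyZ_moebius hω n (hone.trans_ne one_ne_zero) h
  rwa [hone, one_mul, moebius_one hω, doublyZ_one_left hω, refinedZ_swap] at h

theorem singlyZ_one (hω : ω ^ 2 + ω + 1 = 0) (n : ℕ) :
    singlyZ ω n 1 = (1 - ω ^ 2) ^ (n + 1) ^ 2 * refinedZ n 1 1 1 := by
  have hone := moebiusDen_one hω
  have h := prod_pow_mul_cubicZ_moebius hω (n := n) (u := 1) (v := 1) (by simp [hone])
    (by simp [hone])
  simp only [Pi.one_apply, hone, moebius_one hω, prod_const_one, mul_one, one_pow, one_mul,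
    ← Pi.one_def] at h
  rw [singlyZ, cons_one_one, h, refinedZ]
  simp [spectralWeights, refinedWeights]

theorem pow_mul_cubic_term (hω : ω ^ 2 + ω + 1 = 0) (m : ℕ) {z₁ z₂ z₃ : K}
    (h₁ : moebiusDen ω z₁ ≠ 0) (h₂ : moebiusDen ω z₂ ≠ 0) (h₃ : moebiusDen ω z₃ ≠ 0) :
    (moebiusDen ω z₁ * moebiusDen ω z₂ * moebiusDen ω z₃) ^ (m + 3) *
        ((moebius ω z₁ ^ 2 + moebius ω z₁ + 1) *
          (moebius ω z₂ ^ 2 + moebius ω z₂ * moebius ω z₃ + moebius ω z₃ ^ 2) *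
          singlyZ ω (m + 1) (moebius ω z₂) * doublyZ ω m (moebius ω z₁) (moebius ω z₃)) =
      9 * (1 - ω ^ 2) ^ (2 * (m + 2) ^ 2) * ((z₂ * z₃ - z₂ + 1) * (z₂ * z₃ - z₃ + 1) * z₁ *
        refinedZ (m + 1) z₂ 1 1 * refinedZ (m + 1) z₁ z₃ 1) := by
  have hone := moebiusDen_one hω
  have hone' := moebius_one hω
  have hsq := moebiusDen_sq_mul_moebiusDen_sq_mul_add hω h₁ (hone.trans_ne one_ne_zero)
  rw [hone, hone', one_pow, mul_one, mul_one] at hsq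
  calc _ = (moebiusDen ω z₁ ^ 2 * (moebius ω z₁ ^ 2 + moebius ω z₁ + 1)) *
        (moebiusDen ω z₂ ^ 2 * moebiusDen ω z₃ ^ 2 *
          (moebius ω z₂ ^ 2 + moebius ω z₂ * moebius ω z₃ + moebius ω z₃ ^ 2)) *
        (moebiusDen ω z₂ ^ (m + 1) * singlyZ ω (m + 1) (moebius ω z₂)) *
        ((moebiusDen ω z₁ * moebiusDen ω z₃) ^ (m + 1) *
          doublyZ ω m (moebius ω z₁) (moebius ω z₃)) := by ring
    _ = _ := by
      rw [hsq, moebiusDen_sq_mul_moebiusDen_sq_mul_add hω h₂ h₃, pow_mul_singlyZ_moebius hω m h₂,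
        pow_mul_doublyZ_moebius hω m h₁ h₃]
      ring

theorem moebius_ne_moebius (hω : 1 - ω ^ 2 ≠ 0) (hω₀ : ω ≠ 0) {z w : K}
    (hz : moebiusDen ω z ≠ 0) (hw : moebiusDen ω w ≠ 0) (h : z ≠ w) :
    moebius ω z ≠ moebius ω w := fun hzw => by
  have h' := moebiusDen_mul_moebiusDen_mul_moebius_sub hz hw
  rw [hzw, sub_self, mul_zero, eq_comm] at h'
  exact mul_ne_zero (mul_ne_zero hω (pow_ne_zero 2 hω₀)) (sub_ne_zero.2 h) h'

theorem moebius_pow_three_ne_one (hω : ω ^ 2 + ω + 1 = 0) (hω' : 1 - ω ^ 2 ≠ 0)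
    (hω₀ : ω ≠ 0) (h3 : (3 : K) ≠ 0) {z : K} (hz : moebiusDen ω z ≠ 0) (hz₀ : z ≠ 0)
    (hz₁ : z ≠ 1) : moebius ω z ^ 3 ≠ 1 := fun h => by
  have hone : moebiusDen ω 1 ≠ 0 := (moebiusDen_one hω).trans_ne one_ne_zero
  have hne := moebius_ne_moebius hω' hω₀ hz hone hz₁
  have hsq := moebiusDen_sq_mul_moebiusDen_sq_mul_add hω hz hone
  rw [moebius_one hω] at hne
  rw [moebius_one hω, moebiusDen_one hω, mul_eq_zero_of_right _
    (mul_left_cancel₀ (sub_ne_zero.2 hne) (by linear_combination h))] at hsq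
  exact mul_ne_zero h3 hz₀ (by linear_combination -hsq)

theorem one_sub_omega_sq_sq (hω : ω ^ 2 + ω + 1 = 0) : (1 - ω ^ 2) ^ 2 = -3 * ω ^ 2 := by
  linear_combination (ω ^ 2 - ω + 1) * hω

theorem pow_mul_spectral_term (hω : ω ^ 2 + ω + 1 = 0) (m : ℕ) {z₁ z₂ z₃ : K}
    (h₁ : moebiusDen ω z₁ ≠ 0) (h₂ : moebiusDen ω z₂ ≠ 0) (h₃ : moebiusDen ω z₃ ≠ 0) :
    (moebiusDen ω z₁ * moebiusDen ω z₂ * moebiusDen ω z₃) ^ (m + 3) *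
        (ω * singlyZ ω m 1 * (1 - moebius ω z₃) * (moebius ω z₁ - moebius ω z₂) *
          triplyZ ω (m + 1) (moebius ω z₁) (moebius ω z₂) (moebius ω z₃)) =
      -(9 * (1 - ω ^ 2) ^ (2 * (m + 2) ^ 2) *
        (refinedZ m 1 1 1 * (z₁ - z₂) * (z₃ - 1) * spectralZ (m + 2) z₁ z₂ z₃)) := by
  have hone := moebiusDen_one hω
  have h9 : ω ^ 5 * (1 - ω ^ 2) ^ 4 = 9 := by
    have hω3 : ω ^ 3 = 1 := by linear_combination (ω - 1) * hω
    calc _ = (ω ^ 3) * ω ^ 2 * ((1 - ω ^ 2) ^ 2) ^ 2 := by ring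
      _ = 9 * (ω ^ 3) ^ 3 := by rw [one_sub_omega_sq_sq hω]; ring
      _ = 9 := by rw [hω3]; ring
  have hsub := moebiusDen_mul_moebiusDen_mul_moebius_sub (hone.trans_ne one_ne_zero) h₃
  rw [hone, moebius_one hω, one_mul] at hsub
  calc _ = ω * singlyZ ω m 1 * (moebiusDen ω z₃ * (1 - moebius ω z₃)) *
        (moebiusDen ω z₁ * moebiusDen ω z₂ * (moebius ω z₁ - moebius ω z₂)) *
        ((moebiusDen ω z₁ * moebiusDen ω z₂ * moebiusDen ω z₃) ^ (m + 2) *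
          triplyZ ω (m + 1) (moebius ω z₁) (moebius ω z₂) (moebius ω z₃)) := by ring
    _ = _ := by
      rw [hsub, moebiusDen_mul_moebiusDen_mul_moebius_sub h₁ h₂, singlyZ_one hω,
        pow_mul_triplyZ_moebius hω (m + 1) h₁ h₂ h₃, ← h9]
      ring

theorem spectralZ_identity_of_ne [CharZero K] (hω : ω ^ 2 + ω + 1 = 0) (m : ℕ) {z₁ z₂ z₃ : K}
    (h₁ : moebiusDen ω z₁ ≠ 0) (h₂ : moebiusDen ω z₂ ≠ 0) (h₃ : moebiusDen ω z₃ ≠ 0)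
    (hz₀ : z₃ ≠ 0) (hz₁ : z₃ ≠ 1) (h₁₃ : z₁ ≠ z₃) (h₂₃ : z₂ ≠ z₃)
    (hS₁ : refinedZ (m + 1) (1 : K) 1 1 ≠ 0) (hS₃ : refinedZ (m + 1) z₃ 1 1 ≠ 0) :
    refinedZ m 1 1 1 * (z₁ - z₂) * (z₃ - 1) * spectralZ (m + 2) z₁ z₂ z₃ =
      (z₁ * z₃ - z₁ + 1) * (z₁ * z₃ - z₃ + 1) * z₂ * refinedZ (m + 1) z₁ 1 1 *
          refinedZ (m + 1) z₂ z₃ 1 -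
        (z₂ * z₃ - z₂ + 1) * (z₂ * z₃ - z₃ + 1) * z₁ * refinedZ (m + 1) z₂ 1 1 *
          refinedZ (m + 1) z₁ z₃ 1 := by
  have hω₀ : ω ≠ 0 := by rintro rfl; norm_num at hω
  have hκ : 1 - ω ^ 2 ≠ 0 := fun h => by
    have h' := one_sub_omega_sq_sq hω
    rw [h, zero_pow two_ne_zero, eq_comm] at h'
    exact mul_ne_zero (neg_ne_zero.2 three_ne_zero) (pow_ne_zero 2 hω₀) h'
  have hsingly : singlyZ ω (m + 1) (moebius ω z₃) ≠ 0 := fun h => by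
    have h' := pow_mul_singlyZ_moebius hω m h₃
    rw [h, mul_zero, eq_comm] at h'
    exact mul_ne_zero (pow_ne_zero _ hκ) hS₃ h'
  have key := triplyZ_identity hω (moebius_pow_three_ne_one hω hκ hω₀ three_ne_zero h₃ hz₀ hz₁)
    (by rw [singlyZ_one hω]; exact mul_ne_zero (pow_ne_zero _ hκ) hS₁) hsingly
    (moebius_ne_moebius hκ hω₀ h₁ h₃ h₁₃) (moebius_ne_moebius hκ hω₀ h₂ h₃ h₂₃)
  have hleft := pow_mul_spectral_term hω m h₁ h₂ h₃
  have hne : 9 * (1 - ω ^ 2) ^ (2 * (m + 2) ^ 2) ≠ 0 :=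
    mul_ne_zero (by norm_num) (pow_ne_zero _ hκ)
  have hpow₁ := pow_mul_cubic_term hω m h₁ h₂ h₃
  have hpow₂ := pow_mul_cubic_term hω m h₂ h₁ h₃
  rw [mul_comm (moebiusDen ω z₂)] at hpow₂
  refine mul_left_cancel₀ hne ?_
  linear_combination hleft - hpow₁ + hpow₂ -
    (moebiusDen ω z₁ * moebiusDen ω z₂ * moebiusDen ω z₃) ^ (m + 3) * key

end SpectralIdentity

section StepSequences

variable {n : ℕ} {a : Fin n → ℤ} {b : Fin (n + 1) → Bool}

theorem filter_castSucc_lt_succ (j : Fin n) :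
    (univ.filter fun j' : Fin n => j'.castSucc < j.succ) = univ.filter fun j' => j' ≤ j := by
  ext k
  simp [Fin.castSucc_lt_succ_iff]

theorem filter_castSucc_lt_last :
    (univ.filter fun j : Fin n => j.castSucc < Fin.last n) = univ := by
  ext k
  simp [Fin.castSucc_lt_last]

theorem sum_castSucc_lt_succ (a : Fin n → ℤ) (j : Fin n) :
    ∑ j' with j'.castSucc < j.succ, a j' = ∑ j' with j'.castSucc < j.castSucc, a j' + a j := by
  have : (univ.filter fun j' : Fin n => j'.castSucc < j.succ) =
      insert j (univ.filter fun j' : Fin n => j'.castSucc < j.castSucc) := by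
    ext k
    simp [Fin.castSucc_lt_succ_iff, le_iff_eq_or_lt]
  rw [this, sum_insert (by simp), add_comm]

/-- The states of the edges along a row or a column of an alternating sign matrix with entries `a`:
the `k`-th edge carries the sum of the first `k` entries. -/
def edgeState (a : Fin n → ℤ) (k : Fin (n + 1)) : Bool :=
  decide (∑ j with j.castSucc < k, a j = 1)

theorem edgeState_zero (a : Fin n → ℤ) : edgeState a 0 = false := by
  simp [edgeState]

theorem edgeState_last (h : ∑ j, a j = 1) : edgeState a (Fin.last n) = true := by
  rw [edgeState, filter_castSucc_lt_last, h]
  rfl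

theorem toInt_edgeState
    (h : ∀ j, ∑ j' with j' ≤ j, a j' = 0 ∨ ∑ j' with j' ≤ j, a j' = 1) (k : Fin (n + 1)) :
    (edgeState a k).toInt = ∑ j with j.castSucc < k, a j := by
  have hk : ∑ j with j.castSucc < k, a j = 0 ∨ ∑ j with j.castSucc < k, a j = 1 := by
    cases k using Fin.cases with
    | zero => simp
    | succ k => rw [filter_castSucc_lt_succ]; exact h k
  rcases hk with hk | hk <;> simp [edgeState, hk]

theorem toInt_edgeState_succ_sub
    (h : ∀ j, ∑ j' with j' ≤ j, a j' = 0 ∨ ∑ j' with j' ≤ j, a j' = 1) (j : Fin n) :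
    (edgeState a j.succ).toInt - (edgeState a j.castSucc).toInt = a j := by
  rw [toInt_edgeState h, toInt_edgeState h, sum_castSucc_lt_succ, add_sub_cancel_left]

theorem sum_castSucc_lt_of_step (h₀ : b 0 = false)
    (h : ∀ j, (b j.succ).toInt - (b j.castSucc).toInt = a j) (k : Fin (n + 1)) :
    ∑ j with j.castSucc < k, a j = (b k).toInt := by
  induction k using Fin.induction with
  | zero => simp [h₀]
  | succ k ih => rw [sum_castSucc_lt_succ, ih, ← h, add_sub_cancel]

theorem edgeState_of_step (h₀ : b 0 = false)
    (h : ∀ j, (b j.succ).toInt - (b j.castSucc).toInt = a j) : edgeState a = b := by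
  funext k
  rw [edgeState, sum_castSucc_lt_of_step h₀ h]
  cases b k <;> rfl

theorem exists_step {k l : Fin (n + 1)} (hkl : k ≤ l) (hk : b k = false) (hl : b l = true) :
    ∃ j : Fin n, k ≤ j.castSucc ∧ j.succ ≤ l ∧ b j.castSucc = false ∧ b j.succ = true := by
  by_contra! H
  have hfalse : ∀ i, k ≤ i → i ≤ l → b i = false := by
    intro i
    induction i using Fin.induction with
    | zero => intro h _; rwa [Fin.le_zero_iff.1 h] at hk
    | succ i ih =>
      intro hki hil
      rcases hki.eq_or_lt with hki | hki
      · rwa [← hki]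
      · have hki' : k ≤ i.castSucc := Fin.le_castSucc_iff.2 hki
        simpa using H i hki' hil (ih hki' ((Fin.castSucc_le_succ i).trans hil))
  simp [hfalse l hkl le_rfl] at hl

theorem monotone_of_step (h : ∀ j, (b j.succ).toInt - (b j.castSucc).toInt = a j)
    (ha : ∀ j, 0 ≤ a j) : Monotone b := by
  rw [Fin.monotone_iff_le_succ]
  intro j
  have hj := ha j
  rw [← h] at hj
  revert hj
  cases b j.succ <;> cases b j.castSucc <;> simp

theorem eq_zero_and_exists_gt_iff (h : ∀ j, (b j.succ).toInt - (b j.castSucc).toInt = a j)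
    (ha : ∀ j, 0 ≤ a j) (hlast : b (Fin.last n) = true) (j : Fin n) :
    (a j = 0 ∧ ∃ j', j < j' ∧ a j' = 1) ↔ b j.succ = false := by
  have hb := monotone_of_step h ha
  constructor
  · rintro ⟨-, j', hjj', hj'⟩
    have hle : b j.succ ≤ b j'.castSucc := hb (Fin.succ_le_castSucc_iff.2 hjj')
    rw [← h] at hj'
    revert hj' hle
    cases b j.succ <;> cases b j'.succ <;> cases b j'.castSucc <;> simp
  · intro hj
    refine ⟨?_, ?_⟩
    · have hle : b j.castSucc ≤ b j.succ := hb (Fin.castSucc_le_succ j)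
      rw [hj] at hle
      simp [← h, hj, Bool.eq_false_of_le_false hle]
    · obtain ⟨j', hjj', -, hf, ht⟩ := exists_step (Fin.le_last _) hj hlast
      exact ⟨j', Fin.succ_le_castSucc_iff.1 hjj', by rw [← h, hf, ht]; rfl⟩

theorem eq_zero_and_exists_lt_iff (h : ∀ j, (b j.succ).toInt - (b j.castSucc).toInt = a j)
    (ha : ∀ j, 0 ≤ a j) (hzero : b 0 = false) (j : Fin n) :
    (a j = 0 ∧ ∃ j', j' < j ∧ a j' = 1) ↔ b j.castSucc = true := by
  have hb := monotone_of_step h ha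
  constructor
  · rintro ⟨-, j', hjj', hj'⟩
    have hle : b j'.succ ≤ b j.castSucc := hb (Fin.succ_le_castSucc_iff.2 hjj')
    rw [← h] at hj'
    revert hj' hle
    cases b j.castSucc <;> cases b j'.succ <;> cases b j'.castSucc <;> simp
  · intro hj
    refine ⟨?_, ?_⟩
    · have hle : b j.castSucc ≤ b j.succ := hb (Fin.castSucc_le_succ j)
      rw [hj] at hle
      simp [← h, hj, Bool.eq_true_of_true_le hle]
    · obtain ⟨j', -, hjj', hf, ht⟩ := exists_step (Fin.zero_le _) hzero hj
      exact ⟨j', Fin.succ_le_castSucc_iff.1 hjj', by rw [← h, hf, ht]; rfl⟩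

theorem card_castSucc_true_add_card_succ_false {n : ℕ} {b : Fin (n + 2) → Bool}
    (hzero : b 0 = false) (hlast : b (Fin.last (n + 1)) = true) :
    #{i : Fin (n + 1) | b i.castSucc = true} + #{i : Fin (n + 1) | b i.succ = false} = n := by
  have hsplit : #{i : Fin (n + 1) | b i.castSucc = true} +
      #{i : Fin (n + 1) | b i.castSucc = false} = n + 1 := by
    simpa using card_filter_add_card_filter_not (s := (univ : Finset (Fin (n + 1))))
      fun i => b i.castSucc = true
  have hshift : 1 + #{i : Fin (n + 1) | b i.succ = false} =
      #{i : Fin (n + 1) | b i.castSucc = false} := by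
    have h := (Fin.sum_univ_succ fun k => if b k = false then 1 else 0).symm.trans
      (Fin.sum_univ_castSucc _)
    simpa only [hzero, hlast, if_true, Bool.true_eq_false, if_false, add_zero, card_filter] using h
  omega

end StepSequences

section Bijection

variable {n : ℕ}

/-- The states `h` of the horizontal edges and `v` of the vertical edges satisfy the domain wall
boundary conditions and the ice rule at every vertex. -/
structure IsIceState (h : Fin n → Fin (n + 1) → Bool) (v : Fin (n + 1) → Fin n → Bool) : Prop where
  left : ∀ i, h i 0 = false
  right : ∀ i, h i (Fin.last n) = true
  top : ∀ j, v 0 j = false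
  bottom : ∀ j, v (Fin.last n) j = true
  ice : ∀ i j, (h i j.succ).toInt - (h i j.castSucc).toInt =
    (v i.succ j).toInt - (v i.castSucc j).toInt

/-- The states of the horizontal edges in the six-vertex configuration of a matrix. -/
def horizontalState (A : Fin n → Fin n → ℤ) (i : Fin n) : Fin (n + 1) → Bool :=
  edgeState (A i)

/-- The states of the vertical edges in the six-vertex configuration of a matrix. -/
def verticalState (A : Fin n → Fin n → ℤ) (k : Fin (n + 1)) (j : Fin n) : Bool :=
  edgeState (fun i => A i j) k

/-- The encoded matrix whose entries are the jumps of the horizontal edge states `h`. -/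
def iceMatrix (h : Fin n → Fin (n + 1) → Bool) (i j : Fin n) : Fin 3 :=
  match h i j.castSucc, h i j.succ with
  | false, true => 2
  | true, false => 0
  | _, _ => 1

theorem toInt_sub_eq_asmMat_iceMatrix (h : Fin n → Fin (n + 1) → Bool) (i j : Fin n) :
    (h i j.succ).toInt - (h i j.castSucc).toInt = asmMat (iceMatrix h) i j := by
  unfold asmMat iceMatrix
  cases h i j.castSucc <;> cases h i j.succ <;> rfl

theorem asmMat_injective : Function.Injective (asmMat (n := n)) := fun e e' h => by
  funext i j
  have hij := congrFun (congrFun h i) j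
  simp only [asmMat] at hij
  exact Fin.ext (by lia)

theorem IsASM.toInt_horizontalState_sub {A : Fin n → Fin n → ℤ} (hA : IsASM A) (i j : Fin n) :
    (horizontalState A i j.succ).toInt - (horizontalState A i j.castSucc).toInt = A i j :=
  toInt_edgeState_succ_sub (hA.2.1 i) j

theorem IsASM.toInt_verticalState_sub {A : Fin n → Fin n → ℤ} (hA : IsASM A) (i j : Fin n) :
    (verticalState A i.succ j).toInt - (verticalState A i.castSucc j).toInt = A i j :=
  toInt_edgeState_succ_sub (fun i => hA.2.2.1 i j) i

theorem IsASM.isIceState {A : Fin n → Fin n → ℤ} (hA : IsASM A) :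
    IsIceState (horizontalState A) (verticalState A) where
  left _ := edgeState_zero _
  right i := edgeState_last (hA.2.2.2.1 i)
  top _ := edgeState_zero _
  bottom j := edgeState_last (hA.2.2.2.2 j)
  ice i j := by rw [hA.toInt_horizontalState_sub, hA.toInt_verticalState_sub]

variable {h : Fin n → Fin (n + 1) → Bool} {v : Fin (n + 1) → Fin n → Bool}

theorem IsIceState.toInt_sub_eq_asmMat (hv : IsIceState h v) (i j : Fin n) :
    (v i.succ j).toInt - (v i.castSucc j).toInt = asmMat (iceMatrix h) i j := by
  rw [← hv.ice, toInt_sub_eq_asmMat_iceMatrix]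

theorem IsIceState.isASM (hv : IsIceState h v) : IsASM (asmMat (iceMatrix h)) := by
  have hbool : ∀ b : Bool, b.toInt = 0 ∨ b.toInt = 1 := by decide
  have hrow := fun i =>
    sum_castSucc_lt_of_step (hv.left i) (toInt_sub_eq_asmMat_iceMatrix h i)
  have hcolumn := fun j => sum_castSucc_lt_of_step (b := fun k => v k j) (hv.top j)
    fun i => hv.toInt_sub_eq_asmMat i j
  refine ⟨fun i j => ?_, fun i j => ?_, fun i j => ?_, fun i => ?_, fun j => ?_⟩
  · rw [← toInt_sub_eq_asmMat_iceMatrix]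
    cases h i j.castSucc <;> cases h i j.succ <;> simp
  · rw [← filter_castSucc_lt_succ, hrow]; exact hbool _
  · rw [← filter_castSucc_lt_succ, hcolumn]; exact hbool _
  · rw [← filter_castSucc_lt_last, hrow, hv.right]; rfl
  · rw [← filter_castSucc_lt_last, hcolumn, hv.bottom]; rfl

theorem IsIceState.horizontalState_iceMatrix (hv : IsIceState h v) :
    horizontalState (asmMat (iceMatrix h)) = h :=
  funext fun i => edgeState_of_step (hv.left i) (toInt_sub_eq_asmMat_iceMatrix h i)

theorem IsIceState.verticalState_iceMatrix (hv : IsIceState h v) :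
    verticalState (asmMat (iceMatrix h)) = v :=
  funext fun k => funext fun j => congrFun (edgeState_of_step (b := fun k => v k j) (hv.top j)
    fun i => hv.toInt_sub_eq_asmMat i j) k

theorem iceMatrix_horizontalState {e : Fin n → Fin n → Fin 3} (he : IsASM (asmMat e)) :
    iceMatrix (horizontalState (asmMat e)) = e := by
  apply asmMat_injective
  funext i j
  rw [← toInt_sub_eq_asmMat_iceMatrix, he.toInt_horizontalState_sub]

variable {R : Type*} [CommRing R]

theorem SixVertexWeights.weight_eq_zero (w : SixVertexWeights R) {l t r b : Bool}
    (h : r.toInt - l.toInt ≠ b.toInt - t.toInt) : w.weight l t r b = 0 := by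
  revert h
  cases l <;> cases t <;> cases r <;> cases b <;> simp [weight]

/-- The weight of the six-vertex configuration of a matrix. -/
def configurationWeight (W : Fin n → Fin n → SixVertexWeights R) (A : Fin n → Fin n → ℤ) : R :=
  ∏ i, ∏ j, (W i j).weight (horizontalState A i j.castSucc) (verticalState A i.castSucc j)
    (horizontalState A i j.succ) (verticalState A i.succ j)

open Classical in
theorem dwZ_eq_sum_isIceState (W : Fin n → Fin n → SixVertexWeights R) :
    dwZ W = ∑ p : (Fin n → Fin (n + 1) → Bool) × (Fin (n + 1) → Fin n → Bool) with
      IsIceState p.1 p.2, ∏ i, ∏ j, (W i j).weight (p.1 i j.castSucc) (p.2 i.castSucc j)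
        (p.1 i j.succ) (p.2 i.succ j) := by
  rw [dwZ, latticeZ, ← Fintype.sum_prod_type', sum_filter]
  refine sum_congr rfl fun p _ => ?_
  by_cases hice : ∀ i j, (p.1 i j.succ).toInt - (p.1 i j.castSucc).toInt =
      (p.2 i.succ j).toInt - (p.2 i.castSucc j).toInt
  · refine if_congr ⟨fun ⟨hl, hr, ht, hb⟩ => ⟨hl, hr, congrFun ht, congrFun hb, hice⟩,
      fun hp => ⟨hp.left, hp.right, funext hp.top, funext hp.bottom⟩⟩ rfl rfl
  · push Not at hice
    obtain ⟨i, j, hij⟩ := hice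
    rw [prod_eq_zero (mem_univ i) (prod_eq_zero (mem_univ j) ((W i j).weight_eq_zero hij)),
      ite_self, ite_self]

open Classical in
theorem dwZ_eq_sum_isASM (W : Fin n → Fin n → SixVertexWeights R) :
    dwZ W = ∑ e with IsASM (asmMat e), configurationWeight W (asmMat e) := by
  rw [dwZ_eq_sum_isIceState]
  refine sum_bij' (fun p _ => iceMatrix p.1)
    (fun e _ => (horizontalState (asmMat e), verticalState (asmMat e))) ?_ ?_ ?_ ?_ ?_ <;>
    simp only [mem_filter, mem_univ, true_and]
  · exact fun p hp => hp.isASM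
  · exact fun e he => he.isIceState
  · exact fun p hp => Prod.ext hp.horizontalState_iceMatrix hp.verticalState_iceMatrix
  · exact fun e he => iceMatrix_horizontalState he
  · exact fun p hp => by
      rw [configurationWeight, hp.horizontalState_iceMatrix, hp.verticalState_iceMatrix]

end Bijection

section Refinement

variable {R : Type*} [CommRing R] {m : ℕ} {A : Fin (m + 1) → Fin (m + 1) → ℤ}

theorem IsASM.rhoT_eq (hA : IsASM A) :
    rhoT A = #{j : Fin (m + 1) | horizontalState A 0 j.succ = false} := by
  refine congrArg card (filter_congr fun j _ => ?_)
  refine eq_zero_and_exists_gt_iff (hA.toInt_horizontalState_sub 0) (fun k => ?_)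
    (hA.isIceState.right 0) j
  rw [← hA.toInt_verticalState_sub, Fin.castSucc_zero, hA.isIceState.top]
  cases verticalState A (Fin.succ 0) k <;> decide

theorem IsASM.rhoB_eq (hA : IsASM A) :
    rhoB A = #{j : Fin (m + 1) | horizontalState A (Fin.last m) j.castSucc = true} := by
  refine congrArg card (filter_congr fun j _ => ?_)
  refine eq_zero_and_exists_lt_iff (hA.toInt_horizontalState_sub (Fin.last m)) (fun k => ?_)
    (hA.isIceState.left _) j
  rw [← hA.toInt_verticalState_sub, Fin.succ_last, hA.isIceState.bottom]
  cases verticalState A (Fin.last m).castSucc k <;> decide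

theorem IsASM.rhoL_eq (hA : IsASM A) :
    rhoL A = #{i : Fin (m + 1) | verticalState A i.succ 0 = false} := by
  refine congrArg card (filter_congr fun i _ => ?_)
  refine eq_zero_and_exists_gt_iff (b := fun k => verticalState A k 0)
    (fun i => hA.toInt_verticalState_sub i 0) (fun k => ?_) (hA.isIceState.bottom 0) i
  rw [← hA.toInt_horizontalState_sub, Fin.castSucc_zero, hA.isIceState.left]
  cases horizontalState A k (Fin.succ 0) <;> decide

theorem refinedWeights_weight (z₁ z₂ z₃ : R) {i j : Fin (m + 1)} {l t r b : Bool}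
    (hice : r.toInt - l.toInt = b.toInt - t.toInt) (ht : i = 0 → t = false)
    (hb : i = Fin.last m → b = true) (hl : j = 0 → l = false) :
    (refinedWeights z₁ z₂ z₃ i j).weight l t r b =
      (if i = 0 then if r = false then z₁ else 1 else 1) *
        (if i = Fin.last m then if l = true then z₂ else 1 else 1) *
        (if j = 0 then if t = true then z₃ else 1 else 1) := by
  revert hice ht hb hl
  by_cases i = 0 <;> by_cases i = Fin.last m <;> by_cases j = 0 <;>
    cases l <;> cases t <;> cases r <;> cases b <;>
    simp_all [refinedWeights, SixVertexWeights.weight]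

theorem prod_ite_const_one {ι : Type*} [Fintype ι] (p : ι → Prop) [DecidablePred p] (z : R) :
    ∏ j, (if p j then z else 1) = z ^ #{j | p j} := by
  rw [prod_ite, prod_const, prod_const_one, mul_one]

theorem configurationWeight_refinedWeights (hA : IsASM A) (z₁ z₂ z₃ : R) :
    configurationWeight (refinedWeights z₁ z₂ z₃) A =
      z₁ ^ rhoT A * z₂ ^ rhoB A *
        z₃ ^ #{i : Fin (m + 1) | verticalState A i.castSucc 0 = true} := by
  have hv := hA.isIceState
  have hweight := fun i j : Fin (m + 1) => refinedWeights_weight z₁ z₂ z₃ (i := i) (j := j)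
    (hv.ice i j) (by rintro rfl; exact hv.top j) (by rintro rfl; exact hv.bottom j)
    (by rintro rfl; exact hv.left i)
  simp only [configurationWeight, hweight, prod_mul_distrib]
  rw [Fintype.prod_eq_single 0 fun i hi => prod_eq_one fun j _ => if_neg hi,
    Fintype.prod_eq_single (Fin.last m) fun i hi => prod_eq_one fun j _ => if_neg hi,
    prod_comm, Fintype.prod_eq_single 0 fun i hi => prod_eq_one fun j _ => if_neg hi]
  simp only [if_true, prod_ite_const_one, hA.rhoT_eq, hA.rhoB_eq]

theorem pow_mul_Zqua (m : ℕ) (z₁ z₂ : R) {z w : R} (hzw : z * w = 1) :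
    z ^ m * Zqua (m + 1) 1 1 z₁ 1 z₂ w = refinedZ m z₁ z₂ z := by
  classical
  rw [Zqua, ← sum_filter, mul_sum, refinedZ, dwZ_eq_sum_isASM]
  refine sum_congr (by congr) fun e he => ?_
  have hA : IsASM (asmMat e) := by simpa using he
  have hcount : #{i : Fin (m + 1) | verticalState (asmMat e) i.castSucc 0 = true} +
      rhoL (asmMat e) = m := by
    rw [hA.rhoL_eq]
    exact card_castSucc_true_add_card_succ_false (b := fun k => verticalState (asmMat e) k 0)
      (hA.isIceState.top 0) (hA.isIceState.bottom 0)
  have hpow : z ^ m * w ^ rhoL (asmMat e) =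
      z ^ #{i : Fin (m + 1) | verticalState (asmMat e) i.castSucc 0 = true} := by
    rw [← congrArg (z ^ ·) hcount, pow_add, mul_assoc, ← mul_pow, hzw, one_pow, mul_one]
  rw [configurationWeight_refinedWeights hA, ← hpow]
  ring

theorem Zopp_succ (m : ℕ) (z₁ z₂ : R) : Zopp (m + 1) 1 1 z₁ z₂ = refinedZ m z₁ z₂ 1 := by
  rw [Zopp, ← pow_mul_Zqua m z₁ z₂ (one_mul 1), one_pow, one_mul]

theorem Zsing_succ (m : ℕ) (z : R) : Zsing (m + 1) 1 1 z = refinedZ m z 1 1 :=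
  Zopp_succ m z 1

theorem natCast_numASM (n : ℕ) : (numASM n : R) = Zsing n 1 1 1 := by
  simp only [Zsing, Zqua, numASM, one_pow, mul_one, sum_boole]

theorem isASM_one (n : ℕ) : IsASM fun i j : Fin n => if i = j then 1 else 0 := by
  refine ⟨fun i j => ?_, fun i j => ?_, fun i j => ?_, fun i => ?_, fun j => ?_⟩
  · dsimp only; split_ifs <;> simp
  · rw [sum_ite_eq]; split_ifs <;> simp
  · rw [sum_ite_eq']; split_ifs <;> simp
  · simp
  · simp

theorem numASM_ne_zero (n : ℕ) : numASM n ≠ 0 := by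
  classical
  have hone : asmMat (fun i j : Fin n => if i = j then (2 : Fin 3) else 1) =
      fun i j => if i = j then 1 else 0 := by
    funext i j
    simp only [asmMat]
    split_ifs <;> rfl
  refine (card_pos.2 ⟨fun i j => if i = j then 2 else 1, ?_⟩).ne'
  simpa [hone] using isASM_one n

end Refinement

section Genericity

open MvPolynomial

theorem natCast_numASM_succ {R : Type*} [CommRing R] (m : ℕ) :
    (numASM (m + 1) : R) = refinedZ m 1 1 1 := by
  rw [natCast_numASM, Zsing_succ]

theorem moebiusDen_ne_zero {K : Type*} [Field K] {ω z : K} (hω : ω ^ 2 + ω + 1 = 0)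
    (h : z ^ 2 - z + 1 ≠ 0) : moebiusDen ω z ≠ 0 := fun h₀ => h <| by
  have hfactor : z ^ 2 - z + 1 = -ω * (z + ω) * moebiusDen ω z := by
    rw [moebiusDen]
    grind
  rw [hfactor, h₀, mul_zero]

theorem exists_sq_add_self_add_one_eq_zero (K : Type*) [Field K] [CharZero K] [IsAlgClosed K] :
    ∃ ω : K, ω ^ 2 + ω + 1 = 0 := by
  obtain ⟨s, hs⟩ := IsAlgClosed.exists_pow_nat_eq (-3 : K) two_pos
  exact ⟨(s - 1) / 2, by linear_combination hs / 4⟩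

theorem spectralZ_identity_X (m : ℕ) :
    let z : Fin 3 → MvPolynomial (Fin 3) ℤ := X
    refinedZ m 1 1 1 * (z 0 - z 1) * (z 2 - 1) * spectralZ (m + 2) (z 0) (z 1) (z 2) =
      (z 0 * z 2 - z 0 + 1) * (z 0 * z 2 - z 2 + 1) * z 1 * refinedZ (m + 1) (z 0) 1 1 *
          refinedZ (m + 1) (z 1) (z 2) 1 -
        (z 1 * z 2 - z 1 + 1) * (z 1 * z 2 - z 2 + 1) * z 0 * refinedZ (m + 1) (z 1) 1 1 *
          refinedZ (m + 1) (z 0) (z 2) 1 := by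
  intro z
  let P := MvPolynomial (Fin 3) ℤ
  let L := AlgebraicClosure (FractionRing P)
  obtain ⟨f, hf⟩ : ∃ f : P →+* L, Function.Injective f :=
    ⟨(algebraMap (FractionRing P) L).comp (algebraMap P _),
      (algebraMap (FractionRing P) L).injective.comp (IsFractionRing.injective P _)⟩
  have : CharZero L := charZero_of_injective_ringHom hf
  obtain ⟨ω, hω⟩ := exists_sq_add_self_add_one_eq_zero L
  have hne (g : Fin 3 → ℤ) {p : P} (hp : eval g p ≠ 0) : f p ≠ 0 :=
    (map_ne_zero_iff f hf).2 fun h => hp (by rw [h, map_zero])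
  have hden (i : Fin 3) : moebiusDen ω (f (z i)) ≠ 0 := moebiusDen_ne_zero hω <| by
    have h := hne 0 (p := z i ^ 2 - z i + 1) (by simp [z])
    rwa [map_add, map_sub, map_pow, map_one] at h
  have hz₁ : f (z 2) ≠ 1 := sub_ne_zero.1 <| by
    simpa only [map_sub, map_one] using hne 0 (p := z 2 - 1) (by simp [z])
  have hnum : refinedZ (m + 1) (1 : L) 1 1 ≠ 0 := by
    rw [← natCast_numASM_succ]
    exact Nat.cast_ne_zero.2 (numASM_ne_zero _)
  have hrefined : refinedZ (m + 1) (f (z 2)) 1 1 ≠ 0 := by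
    have h := hne 1 (p := refinedZ (m + 1) (z 2) 1 1) (by
      simp only [z, map_refinedZ, eval_X, Pi.one_apply, map_one, ← natCast_numASM_succ]
      exact Nat.cast_ne_zero.2 (numASM_ne_zero _))
    rwa [map_refinedZ, map_one] at h
  apply hf
  simpa only [map_sub, map_mul, map_add, map_one, map_refinedZ, map_spectralZ] using
    spectralZ_identity_of_ne hω m (hden 0) (hden 1) (hden 2) (hne 1 (by simp [z])) hz₁
      (hf.ne (X_injective.ne (by decide))) (hf.ne (X_injective.ne (by decide))) hnum hrefined

theorem spectralZ_identity {R : Type*} [CommRing R] (m : ℕ) (z₁ z₂ z₃ : R) :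
    refinedZ m 1 1 1 * (z₁ - z₂) * (z₃ - 1) * spectralZ (m + 2) z₁ z₂ z₃ =
      (z₁ * z₃ - z₁ + 1) * (z₁ * z₃ - z₃ + 1) * z₂ * refinedZ (m + 1) z₁ 1 1 *
          refinedZ (m + 1) z₂ z₃ 1 -
        (z₂ * z₃ - z₂ + 1) * (z₂ * z₃ - z₃ + 1) * z₁ * refinedZ (m + 1) z₂ 1 1 *
          refinedZ (m + 1) z₁ z₃ 1 := by
  have h := congrArg (eval₂Hom (Int.castRingHom R) ![z₁, z₂, z₃]) (spectralZ_identity_X m)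
  simp only [map_sub, map_mul, map_add, map_one, map_refinedZ, map_spectralZ, eval₂Hom_X'] at h
  simpa using h

end Genericity

section TriplyRefined

theorem stmt11_general {K : Type*} [Field K] (n : ℕ) (hn : 3 ≤ n) {z₁ z₂ z₃ : K} (h₁₂ : z₁ ≠ z₂)
    (hz₀ : z₃ ≠ 0) (hz₁ : z₃ ≠ 1) (hA : (numASM (n - 2) : K) ≠ 0) :
    (z₁ * z₃ - z₃ + 1) * (z₂ * z₃ - z₂ + 1) * z₃ ^ (n - 1) * Ztri n 1 1 z₁ z₂ (1 / z₃) =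
      (z₁ * z₃ / ((numASM (n - 2) : K) * (z₁ - z₂) * (z₃ - 1))) *
        ((z₁ * z₃ - z₁ + 1) * (z₁ * z₃ - z₃ + 1) * z₂ *
            Zsing (n - 1) 1 1 z₁ * Zopp (n - 1) 1 1 z₂ z₃ -
         (z₂ * z₃ - z₂ + 1) * (z₂ * z₃ - z₃ + 1) * z₁ *
            Zsing (n - 1) 1 1 z₂ * Zopp (n - 1) 1 1 z₁ z₃)
      + (z₂ - 1) * (z₃ - 1) * (z₁ * z₃ - z₃ + 1) * z₁ * z₂ ^ (n - 1) * Zsing (n - 1) 1 1 z₁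
      + (z₁ - 1) * (z₃ - 1) * (z₂ * z₃ - z₂ + 1) * z₃ ^ (n - 1) * Zsing (n - 1) 1 1 z₂ := by
  obtain ⟨m, rfl⟩ := Nat.exists_eq_add_of_le' hn
  change (numASM (m + 1) : K) ≠ 0 at hA
  have hden : (numASM (m + 1) : K) * (z₁ - z₂) * (z₃ - 1) ≠ 0 :=
    mul_ne_zero (mul_ne_zero hA (sub_ne_zero.2 h₁₂)) (sub_ne_zero.2 hz₁)
  have hspectral := spectralZ_identity m z₁ z₂ z₃
  rw [← natCast_numASM_succ] at hspectral
  simp only [Nat.reduceSubDiff, Zsing_succ, Zopp_succ]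
  rw [← hspectral, Ztri, mul_assoc, pow_mul_Zqua (m + 2) z₁ z₂ (mul_one_div_cancel hz₀),
    refinedZ_eliminate, ← mul_assoc, div_mul_cancel₀ _ hden]

theorem vz1_ne_vz2 : vz1 ≠ vz2 :=
  (IsFractionRing.injective _ _).ne (MvPolynomial.X_injective.ne (by decide))

theorem vz3_ne_zero : vz3 ≠ 0 :=
  (map_ne_zero_iff _ (IsFractionRing.injective _ _)).2 (MvPolynomial.X_ne_zero 2)

theorem vz3_ne_one : vz3 ≠ 1 := fun h => by
  have hX : (MvPolynomial.X 2 : MvPolynomial (Fin 3) ℚ) = 1 :=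
    (map_eq_one_iff _ (IsFractionRing.injective _ K3)).1 h
  simpa using congrArg (MvPolynomial.eval 0) hX

end TriplyRefined

/-- Identity for the triply-refined ASM generating function at `x = y = 1`,
as an identity in the field of rational functions `ℚ(z1,z2,z3)`, where
`numASM m` is the number of ASMs of size `m`. -/
theorem stmt11 (n : ℕ) (hn : 3 ≤ n) :
    (vz1 * vz3 - vz3 + 1) * (vz2 * vz3 - vz2 + 1) * vz3 ^ (n - 1) *
        Ztri n (1 : K3) 1 vz1 vz2 (1 / vz3) =
      (vz1 * vz3 / ((numASM (n - 2) : K3) * (vz1 - vz2) * (vz3 - 1))) *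
        ((vz1 * vz3 - vz1 + 1) * (vz1 * vz3 - vz3 + 1) * vz2 *
            Zsing (n - 1) (1 : K3) 1 vz1 * Zopp (n - 1) (1 : K3) 1 vz2 vz3 -
         (vz2 * vz3 - vz2 + 1) * (vz2 * vz3 - vz3 + 1) * vz1 *
            Zsing (n - 1) (1 : K3) 1 vz2 * Zopp (n - 1) (1 : K3) 1 vz1 vz3)
      + (vz2 - 1) * (vz3 - 1) * (vz1 * vz3 - vz3 + 1) * vz1 * vz2 ^ (n - 1) *
          Zsing (n - 1) (1 : K3) 1 vz1
      + (vz1 - 1) * (vz3 - 1) * (vz2 * vz3 - vz2 + 1) * vz3 ^ (n - 1) *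
          Zsing (n - 1) (1 : K3) 1 vz2 :=
  stmt11_general n hn vz1_ne_vz2 vz3_ne_zero vz3_ne_one (Nat.cast_ne_zero.2 (numASM_ne_zero _))
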